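/- arXiv:1508.05442 — 3 statements merged into one kernel-verified Lean document; each statement's English description precedes it below -/
import Mathlib

section
/- Let k ∈ ℕ and set l := 4k − 3. Let P be a polynomial with real coefficients of degree < l and let μ be a finite positive Borel measure on [−1, 1]. Let A, B be bounded self-adjoint operators on H with the spectrum of A contained in (−1, 1) and B positive semidefinite, and set X := A + iB. Then for every λ ∈ [−1, 1] the operators I − λX and I − λ(A + tB) (for real t near 0) are invertible, the Bochner integrals defining f(Y) := P(Y) + ∫_{[−1,1]} Y^{l} (I − λY)^{-1} dμ(λ) exist for Y = X and Y = A + tB, and Im f(X) ≥ Σ_{m=1}^{2k−2} ((−1)^{m−1} / (2m−1)!) · D^{2m−1}f(A;B) (the right-hand side being 0 when k = 1), where D^{m}f(A;B) denotes the m-th derivative at t = 0 of the map t ↦ f(A + tB). -/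
open ContinuousLinearMap MeasureTheory

variable {H : Type*} [NormedAddCommGroup H] [InnerProductSpace ℂ H] [CompleteSpace H]

/-- The imaginary part `(Y - Y*)/(2i)` of a bounded operator. -/
noncomputable def opIm (Y : H →L[ℂ] H) : H →L[ℂ] H := (2 * Complex.I)⁻¹ • (Y - star Y)

/-- The operator function `Y ↦ P(Y) + ∫_{[−1,1]} Y^l (I − λY)⁻¹ dμ(λ)`, the integral
representation of an operator `l`-tone function on `(−1,1)`. -/
noncomputable def fcal (P : Polynomial ℝ) (μ : Measure ℝ) (l : ℕ) (Y : H →L[ℂ] H) :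
    H →L[ℂ] H :=
  Polynomial.aeval Y (P.map Complex.ofRealHom) +
    ∫ s, Y ^ l * Ring.inverse (1 - (s : ℂ) • Y) ∂μ

/-! Write `R(s) = (1 - sA)⁻¹` and `W(s, z) = (1 - s(A + zB))⁻¹`. Telescoping the resolvent
identity gives, for `Y = A + zB`, that `Yˡ W(s, z)` is a polynomial in `z` of degree `< l` plus
`zˡ (R(s) B)ˡ W(s, z)`. After integration this is the Taylor expansion of `z ↦ f(A + zB)`, valid at
every complex `z` for which the resolvents exist. Put `z = i`. The Taylor coefficients are
self-adjoint, so the imaginary part keeps only those of odd order, with alternating signs. For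
`l = 2M + 1` with `M` even, `iˡ = i`, and the imaginary part of the remainder is the real part of
`∫ (R B)ˡ W`, which is nonnegative: `(R B)ˡ W = N* (B + is BRB) N` with `N = W (B R)ᴹ`, where the
second term contributes a skew-adjoint operator. -/

open Filter Topology
open scoped Ring ComplexStarModule

section Algebra

open Polynomial

lemma commute_ringInverse_right {M : Type*} [MonoidWithZero M] {a b : M} (h : Commute a b) :
    Commute a b⁻¹ʳ := by
  by_cases hb : IsUnit b
  · obtain ⟨u, rfl⟩ := hb
    rw [Ring.inverse_unit]
    exact h.units_inv_right
  · rw [Ring.inverse_non_unit _ hb]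
    exact Commute.zero_right a

lemma semiconjBy_ringInverse {M : Type*} [MonoidWithZero M] {v x y : M} (hv : IsUnit v)
    (h : SemiconjBy v x y) : SemiconjBy v⁻¹ʳ y x := by
  obtain ⟨u, rfl⟩ := hv
  rw [Ring.inverse_unit]
  exact h.units_inv_symm_left

lemma map_ringInverse_of_isUnit {M N F : Type*} [MonoidWithZero M] [MonoidWithZero N]
    [FunLike F M N] [MonoidHomClass F M N] (f : F) {a : M} (ha : IsUnit a) :
    f a⁻¹ʳ = (f a)⁻¹ʳ := by
  rw [← one_mul (f a)⁻¹ʳ, Ring.eq_mul_inverse_iff_mul_eq _ _ _ (ha.map f), ← map_mul,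
    Ring.inverse_mul_cancel _ ha, map_one]

variable {R : Type*} [Ring R]

lemma pow_mul_eq_sum_add_pow_mul {y w c e : R} (hyw : Commute y w) (h : y * w = c + e * w)
    (l : ℕ) :
    y ^ l * w = ∑ j ∈ Finset.range l, e ^ j * c * y ^ (l - 1 - j) + e ^ l * w := by
  induction l with
  | zero => simp
  | succ l ih =>
    have hshift : (∑ j ∈ Finset.range l, e ^ j * c * y ^ (l - 1 - j)) * y =
        ∑ j ∈ Finset.range l, e ^ j * c * y ^ (l - j) := by
      rw [Finset.sum_mul]
      refine Finset.sum_congr rfl fun j hj => ?_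
      rw [mul_assoc, ← pow_succ]
      congr 2
      have := Finset.mem_range.1 hj
      omega
    calc y ^ (l + 1) * w = y ^ l * w * y := by rw [pow_succ, mul_assoc, mul_assoc, hyw.eq]
      _ = (∑ j ∈ Finset.range l, e ^ j * c * y ^ (l - 1 - j)) * y + e ^ l * (y * w) := by
        rw [ih, add_mul, mul_assoc, hyw.eq]
      _ = ∑ j ∈ Finset.range (l + 1), e ^ j * c * y ^ (l + 1 - 1 - j) + e ^ (l + 1) * w := by
        rw [hshift, h, mul_add, Finset.sum_range_succ, Nat.add_sub_cancel, Nat.sub_self, pow_zero,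
          mul_one, pow_succ, mul_assoc (e ^ l) e w, add_assoc]

lemma commute_ringInverse_one_sub_mul {S : R} (hS : ∀ x, Commute S x) (y : R) :
    Commute y (1 - S * y)⁻¹ʳ :=
  commute_ringInverse_right ((Commute.one_right y).sub_right ((hS y).symm.mul_right (.refl y)))

lemma mul_ringInverse_one_sub_mul {S a y : R} (hS : ∀ x, Commute S x) (ha : IsUnit (1 - S * a))
    (hy : IsUnit (1 - S * y)) :
    y * (1 - S * y)⁻¹ʳ =
      a * (1 - S * a)⁻¹ʳ + (1 - S * a)⁻¹ʳ * (y - a) * (1 - S * y)⁻¹ʳ := by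
  have hclear : (1 - S * a) * y = a * (1 - S * y) + (y - a) := by
    rw [sub_mul, mul_sub, (hS a).eq]
    noncomm_ring
  calc y * (1 - S * y)⁻¹ʳ
      = (1 - S * a)⁻¹ʳ * ((1 - S * a) * y) * (1 - S * y)⁻¹ʳ := by
        rw [Ring.inverse_mul_cancel_left _ _ ha]
    _ = (1 - S * a)⁻¹ʳ * a + (1 - S * a)⁻¹ʳ * (y - a) * (1 - S * y)⁻¹ʳ := by
        rw [hclear, mul_add, add_mul, ← mul_assoc, Ring.mul_inverse_cancel_right _ _ hy]
    _ = _ := by rw [(commute_ringInverse_one_sub_mul hS a).eq]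

variable {𝕜 : Type*} [CommSemiring 𝕜] [Algebra 𝕜 R]

/-- Evaluation, at a scalar, of polynomials with coefficients in a noncommutative algebra. It is
an algebra homomorphism because scalars are central, so that polynomials over `R` describe the
functions `z ↦ ∑ zⁿ • qₙ`. -/
noncomputable def evalScalar (z : 𝕜) : R[X] →ₐ[𝕜] R :=
  eval₂AlgHom (AlgHom.id 𝕜 R) (algebraMap 𝕜 R z) fun a => (Algebra.commutes z a).symm

lemma evalScalar_C (z : 𝕜) (a : R) : evalScalar z (C a) = a := eval₂_C _ _

lemma evalScalar_X (z : 𝕜) : evalScalar z (X : R[X]) = algebraMap 𝕜 R z := eval₂_X _ _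

lemma evalScalar_line (a b : R) (z : 𝕜) : evalScalar z (C b * X + C a) = a + z • b := by
  rw [map_add, map_mul, evalScalar_C, evalScalar_C, evalScalar_X, ← Algebra.commutes,
    ← Algebra.smul_def, add_comm]

lemma evalScalar_of_degree_lt {Q : R[X]} {l : ℕ} (hQ : Q.degree < l) (z : 𝕜) :
    evalScalar z Q = ∑ n ∈ Finset.range l, z ^ n • Q.coeff n := by
  change Q.eval₂ (RingHom.id R) (algebraMap 𝕜 R z) = _
  rw [eval₂_eq_sum, sum_eq_of_subset (s := Finset.range l) _ (by simp) fun n hn =>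
      Finset.mem_range.2 (Nat.cast_lt.1 ((le_degree_of_mem_supp n hn).trans_lt hQ))]
  simp only [RingHom.id_apply, ← map_pow, ← Algebra.commutes, Algebra.smul_def]

lemma natDegree_line_pow_le (a b : R) (n : ℕ) : ((C b * X + C a) ^ n).natDegree ≤ n :=
  (natDegree_pow_le_of_le n natDegree_linear_le).trans_eq (mul_one n)

lemma exists_aeval_add_smul_eq_sum (a b : R) {P : 𝕜[X]} {l : ℕ} (hP : P.degree < l) :
    ∃ q : ℕ → R, ∀ z : 𝕜, aeval (a + z • b) P = ∑ n ∈ Finset.range l, z ^ n • q n := by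
  have hdeg : aeval (C b * X + C a) P ∈ degreeLT R l := by
    rw [aeval_def, eval₂_eq_sum, sum_def]
    refine sum_mem fun n hn => mem_degreeLT.2 ?_
    rw [← Algebra.smul_def]
    calc (P.coeff n • (C b * X + C a) ^ n).degree ≤ ((C b * X + C a) ^ n).degree :=
          degree_smul_le _ _
      _ ≤ (n : WithBot ℕ) := natDegree_le_iff_degree_le.1 (natDegree_line_pow_le a b n)
      _ < (l : WithBot ℕ) := (le_degree_of_mem_supp n hn).trans_lt hP
  refine ⟨(aeval (C b * X + C a) P).coeff, fun z => ?_⟩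
  rw [← evalScalar_of_degree_lt (mem_degreeLT.1 hdeg), ← aeval_algHom_apply, evalScalar_line]

lemma exists_pow_mul_ringInverse_eq_sum {S a : R} (hS : ∀ x, Commute S x)
    (ha : IsUnit (1 - S * a)) (b : R) (l : ℕ) :
    ∃ q : ℕ → R, ∀ z : 𝕜, IsUnit (1 - S * (a + z • b)) →
      (a + z • b) ^ l * (1 - S * (a + z • b))⁻¹ʳ = ∑ n ∈ Finset.range l, z ^ n • q n +
        z ^ l • (((1 - S * a)⁻¹ʳ * b) ^ l * (1 - S * (a + z • b))⁻¹ʳ) := by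
  set r := (1 - S * a)⁻¹ʳ
  set Q : R[X] := ∑ j ∈ Finset.range l,
    (C (r * b) * X) ^ j * C (a * r) * (C b * X + C a) ^ (l - 1 - j) with hQ
  have hdeg : Q ∈ degreeLT R l := by
    refine sum_mem fun j hj => mem_degreeLT.2 ?_
    have hj := Finset.mem_range.1 hj
    have hmul : ((C (r * b) * X) ^ j * C (a * r) * (C b * X + C a) ^ (l - 1 - j)).natDegree ≤
        j * (0 + 1) + 0 + (l - 1 - j) :=
      natDegree_mul_le_of_le (natDegree_mul_le_of_le
        (natDegree_pow_le_of_le j (natDegree_mul_le_of_le (natDegree_C _).le natDegree_X_le))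
        (natDegree_C _).le)
        (natDegree_line_pow_le a b _)
    exact (natDegree_le_iff_degree_le.1 hmul).trans_lt (Nat.cast_lt.2 (by omega))
  refine ⟨Q.coeff, fun z hz => ?_⟩
  have hev : evalScalar z (C (r * b) * X) = z • (r * b) := by
    rw [map_mul, evalScalar_C, evalScalar_X, ← Algebra.commutes, Algebra.smul_def]
  have hkey := mul_ringInverse_one_sub_mul hS ha hz
  rw [add_sub_cancel_left, mul_smul_comm] at hkey
  rw [← evalScalar_of_degree_lt (mem_degreeLT.1 hdeg), hQ, map_sum,
    pow_mul_eq_sum_add_pow_mul (commute_ringInverse_one_sub_mul hS _) hkey, _root_.smul_pow,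
    smul_mul_assoc]
  refine congrArg (· + _) (Finset.sum_congr rfl fun j _ => ?_)
  rw [map_mul, map_mul, map_pow, map_pow, hev, evalScalar_C, evalScalar_line]

end Algebra

section Calculus

variable {𝕜 E : Type*} [NontriviallyNormedField 𝕜] [NormedAddCommGroup E] [NormedSpace 𝕜 E]

lemma iteratedDeriv_pow_smul_zero {f : 𝕜 → E} {n : ℕ} (hf : ContDiffAt 𝕜 n f 0) (j : ℕ) :
    iteratedDeriv n (fun t => t ^ j • f t) 0 =
      (n.descFactorial j : 𝕜) • iteratedDeriv (n - j) f 0 := by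
  have hLeibniz : iteratedDeriv n ((fun t : 𝕜 => t ^ j) • f) 0 = ∑ i ∈ Finset.range (n + 1),
      n.choose i • iteratedDeriv i (fun t : 𝕜 => t ^ j) 0 • iteratedDeriv (n - i) f 0 := by
    simpa only [iteratedDerivWithin_univ] using iteratedDerivWithin_smul (𝔸 := 𝕜)
      (Set.mem_univ (0 : 𝕜)) uniqueDiffOn_univ (by fun_prop) (contDiffWithinAt_univ.2 hf)
  have hvanish : ∀ i, i ≠ j →
      n.choose i • iteratedDeriv i (fun t : 𝕜 => t ^ j) 0 • iteratedDeriv (n - i) f 0 = 0 := by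
    intro i hi
    rw [iteratedDeriv_fun_pow_zero, if_neg hi, Nat.cast_zero, zero_smul, smul_zero]
  change iteratedDeriv n ((fun t : 𝕜 => t ^ j) • f) 0 = _
  rw [hLeibniz, Finset.sum_eq_single j (fun i _ => hvanish i),
    iteratedDeriv_fun_pow_zero, if_pos rfl, ← Nat.cast_smul_eq_nsmul 𝕜, smul_smul,
    ← Nat.cast_mul, mul_comm, Nat.descFactorial_eq_factorial_mul_choose]
  intro hj
  rw [Nat.choose_eq_zero_of_lt (by simpa [Nat.lt_succ_iff] using hj), zero_smul]

lemma iteratedDeriv_eq_factorial_smul_of_eventuallyEq {F G : 𝕜 → E} {q : ℕ → E} {l n : ℕ}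
    (hn : n < l) (hG : ContDiffAt 𝕜 n G 0)
    (hF : F =ᶠ[𝓝 0] fun t => ∑ j ∈ Finset.range l, t ^ j • q j + t ^ l • G t) :
    iteratedDeriv n F 0 = (n.factorial : 𝕜) • q n := by
  rw [hF.iteratedDeriv_eq, iteratedDeriv_fun_add (by fun_prop) (by fun_prop),
    iteratedDeriv_fun_sum (fun j _ => by fun_prop), iteratedDeriv_pow_smul_zero hG,
    Nat.descFactorial_of_lt hn, Nat.cast_zero, zero_smul, add_zero,
    Finset.sum_eq_single_of_mem n (Finset.mem_range.2 hn)]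
  · rw [iteratedDeriv_pow_smul_zero contDiffAt_const, Nat.descFactorial_self, Nat.sub_self,
      iteratedDeriv_zero]
  · intro j _ hj
    rw [iteratedDeriv_pow_smul_zero contDiffAt_const]
    rcases hj.lt_or_gt with h | h
    · rw [iteratedDeriv_const, if_neg (Nat.sub_ne_zero_of_lt h), smul_zero]
    · rw [Nat.descFactorial_of_lt h, Nat.cast_zero, zero_smul]

lemma iteratedDeriv_star [StarRing 𝕜] [TrivialStar 𝕜] [StarAddMonoid E] [ContinuousStar E]
    [StarModule 𝕜 E] (f : 𝕜 → E) (n : ℕ) :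
    iteratedDeriv n (fun t => star (f t)) = fun t => star (iteratedDeriv n f t) := by
  induction n with
  | zero => simp only [iteratedDeriv_zero]
  | succ n ih => simp only [iteratedDeriv_succ, ih, deriv.star']

variable {R : Type*} [NormedRing R] [NormedAlgebra 𝕜 R] [HasSummableGeomSeries R]

lemma contDiffAt_ringInverse_one_sub_mul {S a : R} (h : IsUnit (1 - S * a)) (b : R) (n : ℕ) :
    ContDiffAt 𝕜 n (fun t : 𝕜 => (1 - S * (a + t • b))⁻¹ʳ) 0 := by
  obtain ⟨u, hu⟩ := h
  refine ContDiffAt.comp (g := Ring.inverse) (f := fun t : 𝕜 => 1 - S * (a + t • b)) 0 ?_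
    (by fun_prop)
  simpa only [zero_smul, add_zero, ← hu] using contDiffAt_ringInverse 𝕜 u

end Calculus

section Positivity

variable {R : Type*} [Ring R] [StarRing R] [Algebra ℂ R] [StarModule ℂ R]

lemma pow_mul_ringInverse_eq_star_mul_mul {d b : R} (hd : IsSelfAdjoint d) (hdu : IsUnit d)
    (hb : IsSelfAdjoint b) {s : ℝ} (hv : IsUnit (d - ((s : ℂ) * Complex.I) • b)) (m : ℕ) :
    (d⁻¹ʳ * b) ^ (2 * m + 1) * (d - ((s : ℂ) * Complex.I) • b)⁻¹ʳ =
      star ((d - ((s : ℂ) * Complex.I) • b)⁻¹ʳ * (b * d⁻¹ʳ) ^ m) *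
        (b + ((s : ℂ) * Complex.I) • (b * d⁻¹ʳ * b)) *
        ((d - ((s : ℂ) * Complex.I) • b)⁻¹ʳ * (b * d⁻¹ʳ) ^ m) := by
  set c := (s : ℂ) * Complex.I with hc
  set v := d - c • b with hv_def
  set r := d⁻¹ʳ
  have hr : IsSelfAdjoint r := hd.ringInverse
  have hsemi : SemiconjBy v⁻¹ʳ (b * r) (r * b) := by
    refine semiconjBy_ringInverse hv ?_
    change v * (r * b) = b * r * v
    rw [hv_def, sub_mul, mul_sub, Ring.mul_inverse_cancel_left _ _ hdu,
      Ring.inverse_mul_cancel_right _ _ hdu, smul_mul_assoc, mul_smul_comm, mul_assoc]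
  have hstar_v : star v = d + c • b := by
    simp [hv_def, hc, hd.star_eq, hb.star_eq]
  have hcentre : star v * (r * b) = b + c • (b * r * b) := by
    rw [hstar_v, add_mul, Ring.mul_inverse_cancel_left _ _ hdu, smul_mul_assoc, mul_assoc]
  have hstar_inv : star v⁻¹ʳ * star v = 1 := by
    rw [← star_mul, Ring.mul_inverse_cancel _ hv, star_one]
  calc (r * b) ^ (2 * m + 1) * v⁻¹ʳ
      = (r * b) ^ m * (star v⁻¹ʳ * star v) * (r * b) * ((r * b) ^ m * v⁻¹ʳ) := by
        rw [hstar_inv, mul_one, ← pow_succ, ← mul_assoc, ← pow_add]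
        congr 2
        omega
    _ = star (v⁻¹ʳ * (b * r) ^ m) * (star v * (r * b)) * (v⁻¹ʳ * (b * r) ^ m) := by
        rw [← (hsemi.pow_right m).eq, star_mul, star_pow, star_mul, hr.star_eq, hb.star_eq]
        simp only [mul_assoc]
    _ = _ := by rw [hcentre]

variable [PartialOrder R] [StarOrderedRing R]

lemma realPart_pow_mul_ringInverse_nonneg {d b : R} (hd : IsSelfAdjoint d) (hdu : IsUnit d)
    (hb : 0 ≤ b) {s : ℝ} (hv : IsUnit (d - ((s : ℂ) * Complex.I) • b)) (m : ℕ) :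
    0 ≤ (ℜ ((d⁻¹ʳ * b) ^ (2 * m + 1) * (d - ((s : ℂ) * Complex.I) • b)⁻¹ʳ) : R) := by
  have hb' : IsSelfAdjoint b := .of_nonneg hb
  set N := (d - ((s : ℂ) * Complex.I) • b)⁻¹ʳ * (b * d⁻¹ʳ) ^ m
  have hbrb : IsSelfAdjoint (star N * (b * d⁻¹ʳ * b) * N) := by
    refine IsSelfAdjoint.conjugate' ?_ N
    simpa only [hb'.star_eq] using hd.ringInverse.conjugate b
  have hre : ((s : ℂ) * Complex.I).re = 0 := by simp
  rw [pow_mul_ringInverse_eq_star_mul_mul hd hdu hb' hv, mul_add, add_mul, mul_smul_comm,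
    smul_mul_assoc, map_add, realPart_smul, hre, hbrb.imaginaryPart, zero_smul, smul_zero, sub_zero,
    add_zero, (hb'.conjugate' N).coe_realPart]
  exact star_left_conjugate_nonneg hb N

end Positivity

section Operators

lemma norm_lt_one_of_spectrum_subset {A : H →L[ℂ] H} (hA : IsSelfAdjoint A)
    (hspA : spectrum ℂ A ⊆ (fun x : ℝ => (x : ℂ)) '' Set.Ioo (-1 : ℝ) 1) : ‖A‖ < 1 := by
  cases subsingleton_or_nontrivial H with
  | inl _ => simp [Subsingleton.elim A 0]
  | inr _ =>
    obtain ⟨z, hz, hnorm⟩ := spectrum.exists_nnnorm_eq_spectralRadius A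
    obtain ⟨x, hx, rfl⟩ := hspA hz
    rw [hA.spectralRadius_eq_nnnorm, ENNReal.coe_inj] at hnorm
    rw [← coe_nnnorm, ← hnorm, coe_nnnorm, Complex.norm_real, Real.norm_eq_abs, abs_lt]
    exact hx

lemma isUnit_one_sub_add_I_smul {A B : H →L[ℂ] H} (hA : ‖A‖ < 1) (hB : IsSelfAdjoint B) :
    IsUnit (1 - (A + Complex.I • B)) := by
  refine isUnit_of_forall_le_norm_inner_map _ (c := ⟨1 - ‖A‖, sub_nonneg.2 hA.le⟩)
    (sub_pos.2 hA) fun x => ?_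
  have hBx : (inner ℂ (B x) x).im = 0 := hB.isSymmetric.im_inner_apply_self x
  have hAx : (inner ℂ (A x) x).re ≤ ‖A‖ * ‖x‖ ^ 2 :=
    calc (inner ℂ (A x) x).re ≤ ‖A x‖ * ‖x‖ :=
          re_inner_le_norm (𝕜 := ℂ) _ _
      _ ≤ ‖A‖ * ‖x‖ * ‖x‖ := by gcongr; exact A.le_opNorm x
      _ = ‖A‖ * ‖x‖ ^ 2 := by ring
  have hre : (inner ℂ ((1 - (A + Complex.I • B)) x) x).re = ‖x‖ ^ 2 - (inner ℂ (A x) x).re := by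
    simp [hBx, ← Complex.ofReal_pow]
  calc ‖x‖ ^ 2 * (1 - ‖A‖) ≤ (inner ℂ ((1 - (A + Complex.I • B)) x) x).re := by
        rw [hre]; linarith
    _ ≤ _ := Complex.re_le_norm _

lemma isUnit_one_sub_smul_add_I_smul {A B : H →L[ℂ] H} (hA : ‖A‖ < 1) (hB : IsSelfAdjoint B) {s : ℝ}
    (hs : s ∈ Set.Icc (-1 : ℝ) 1) : IsUnit (1 - (s : ℂ) • (A + Complex.I • B)) := by
  have hsA : ‖(s : ℂ) • A‖ < 1 := by
    rw [norm_smul, Complex.norm_real]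
    exact (mul_le_of_le_one_left (norm_nonneg A) (abs_le.2 hs)).trans_lt hA
  rw [smul_add, smul_comm]
  exact isUnit_one_sub_add_I_smul hsA (IsSelfAdjoint.smul (Complex.conj_ofReal s) hB)

end Operators

section CompactIntegral

variable {K : Set ℝ} {R : Type*} [NormedRing R] [NormedAlgebra ℂ R]

/-- The coordinate function `s ↦ s • 1` on `K`. Being central in `C(K, R)`, it allows the family
of resolvents `(1 - s • y)⁻¹`, `s ∈ K`, to be treated as the single inverse of
`1 - scalarCoord * y`. -/
noncomputable def scalarCoord : C(K, R) where
  toFun s := ((s : ℝ) : ℂ) • 1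
  continuous_toFun := by fun_prop

lemma commute_scalarCoord (f : C(K, R)) : Commute scalarCoord f := by
  ext s
  simp [scalarCoord]

lemma one_sub_scalarCoord_mul_const_apply (y : R) (s : K) :
    (1 - scalarCoord * ContinuousMap.const K y : C(K, R)) s = 1 - ((s : ℝ) : ℂ) • y := by
  simp [scalarCoord]

variable [CompleteSpace R]

lemma isUnit_one_sub_scalarCoord_mul_const {y : R} :
    IsUnit (1 - scalarCoord * ContinuousMap.const K y) ↔
      ∀ s ∈ K, IsUnit (1 - (s : ℂ) • y) := by
  simp_rw [ContinuousMap.isUnit_iff_forall_isUnit, one_sub_scalarCoord_mul_const_apply,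
    Subtype.forall]

lemma ringInverse_one_sub_scalarCoord_mul_const_apply {y : R}
    (hy : ∀ s ∈ K, IsUnit (1 - (s : ℂ) • y)) (s : K) :
    (1 - scalarCoord * ContinuousMap.const K y : C(K, R))⁻¹ʳ s = (1 - ((s : ℝ) : ℂ) • y)⁻¹ʳ := by
  rw [← one_sub_scalarCoord_mul_const_apply]
  exact map_ringInverse_of_isUnit ((Pi.evalRingHom _ s).comp ContinuousMap.coeFnRingHom)
    (isUnit_one_sub_scalarCoord_mul_const.2 hy)

lemma ringInverse_mul_const_pow_apply {a : R} (ha : ∀ s ∈ K, IsUnit (1 - (s : ℂ) • a)) (b : R)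
    (l : ℕ) (s : K) :
    (((1 - scalarCoord * ContinuousMap.const K a)⁻¹ʳ * ContinuousMap.const K b) ^ l : C(K, R)) s =
      ((1 - ((s : ℝ) : ℂ) • a)⁻¹ʳ * b) ^ l := by
  rw [ContinuousMap.pow_apply, ContinuousMap.mul_apply,
    ringInverse_one_sub_scalarCoord_mul_const_apply ha, ContinuousMap.const_apply]

variable [CompactSpace K]

lemma eventually_isUnit_one_sub_smul {a : R} (ha : ∀ s ∈ K, IsUnit (1 - (s : ℂ) • a)) (b : R) :
    ∀ᶠ t : ℝ in 𝓝 0, ∀ s ∈ K, IsUnit (1 - (s : ℂ) • (a + t • b)) := by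
  simp_rw [← isUnit_one_sub_scalarCoord_mul_const] at ha ⊢
  have hcont : Continuous fun t : ℝ => 1 - scalarCoord * ContinuousMap.const K (a + t • b) := by
    fun_prop
  exact hcont.continuousAt.eventually_mem (Units.isOpen.mem_nhds (by simpa using ha))

lemma integrable_mul_ringInverse_one_sub_smul {μ : Measure ℝ} [IsFiniteMeasure μ]
    (hμ : μ Kᶜ = 0) (c : R) {y : R} (hy : ∀ s ∈ K, IsUnit (1 - (s : ℂ) • y)) :
    Integrable (fun s : ℝ => c * (1 - (s : ℂ) • y)⁻¹ʳ) μ := by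
  have hcont : ContinuousOn (fun s : ℝ => c * (1 - (s : ℂ) • y)⁻¹ʳ) K := by
    refine continuousOn_const.mul fun s hs => ContinuousAt.continuousWithinAt ?_
    obtain ⟨u, hu⟩ := hy s hs
    refine ContinuousAt.comp (g := Ring.inverse) (f := fun s : ℝ => 1 - (s : ℂ) • y) ?_
      (by fun_prop)
    simpa only [← hu] using NormedRing.inverse_continuousAt u
  rw [← Measure.restrict_eq_self_of_ae_mem (mem_ae_iff.2 hμ)]
  exact hcont.integrableOn_compact (isCompact_iff_compactSpace.2 inferInstance)

variable {E : Type*} [NormedAddCommGroup E] [NormedSpace ℂ E] [CompleteSpace E]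

/-- Integration over a compact set `K` of reals against a finite measure, as a continuous linear
map on the Banach space `C(K, E)`. It lets identities and smoothness in the Banach algebra
`C(K, E)` be transferred to integrals over `K`. -/
noncomputable def compactIntegral (K : Set ℝ) [CompactSpace K] (μ : Measure ℝ)
    [IsFiniteMeasure μ] : C(K, E) →L[ℂ] E :=
  L1.integralCLM' ℂ ∘L ContinuousMap.toLp 1 (μ.comap Subtype.val) ℂ

lemma compactIntegral_eq_integral {μ : Measure ℝ} [IsFiniteMeasure μ] (hμ : μ Kᶜ = 0)
    {f : C(K, E)} {g : ℝ → E} (hfg : ∀ s : K, f s = g s) :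
    compactIntegral K μ f = ∫ s, g s ∂μ := by
  have hK : MeasurableSet K := (isCompact_iff_compactSpace.2 inferInstance).measurableSet
  calc compactIntegral K μ f
      = ∫ s, ContinuousMap.toLp 1 (μ.comap Subtype.val) ℂ f s ∂μ.comap (Subtype.val : K → ℝ) := by
        rw [← L1.integral_eq_integral, L1.integral_eq' ℂ]
        rfl
    _ = ∫ s : K, g s ∂μ.comap Subtype.val := by
        simp_rw [← hfg]
        exact integral_congr_ae (ContinuousMap.coeFn_toLp _ f)
    _ = ∫ s, g s ∂μ := by
        rw [integral_subtype_comap hK, Measure.restrict_eq_self_of_ae_mem (mem_ae_iff.2 hμ)]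

lemma integral_mul_ringInverse_eq_compactIntegral {μ : Measure ℝ} [IsFiniteMeasure μ]
    (hμ : μ Kᶜ = 0) {y : R} (hy : ∀ s ∈ K, IsUnit (1 - (s : ℂ) • y)) {c : C(K, R)} {g : ℝ → R}
    (hcg : ∀ s : K, c s = g s) :
    ∫ s, g s * (1 - (s : ℂ) • y)⁻¹ʳ ∂μ =
      compactIntegral K μ (c * (1 - scalarCoord * ContinuousMap.const K y)⁻¹ʳ) := by
  refine (compactIntegral_eq_integral hμ fun s => ?_).symm
  rw [ContinuousMap.mul_apply, ringInverse_one_sub_scalarCoord_mul_const_apply hy, hcg]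

lemma exists_integral_pow_mul_ringInverse_eq_sum {μ : Measure ℝ} [IsFiniteMeasure μ]
    (hμ : μ Kᶜ = 0) {a : R} (ha : ∀ s ∈ K, IsUnit (1 - (s : ℂ) • a)) (b : R) (l : ℕ) :
    ∃ q : ℕ → R, ∀ z : ℂ, (∀ s ∈ K, IsUnit (1 - (s : ℂ) • (a + z • b))) →
      ∫ s, (a + z • b) ^ l * (1 - (s : ℂ) • (a + z • b))⁻¹ʳ ∂μ =
        ∑ n ∈ Finset.range l, z ^ n • q n +
          z ^ l • ∫ s, ((1 - (s : ℂ) • a)⁻¹ʳ * b) ^ l * (1 - (s : ℂ) • (a + z • b))⁻¹ʳ ∂μ := by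
  obtain ⟨q, hq⟩ := exists_pow_mul_ringInverse_eq_sum (𝕜 := ℂ) commute_scalarCoord
    (isUnit_one_sub_scalarCoord_mul_const.2 ha) (.const K b) l
  refine ⟨fun n => compactIntegral K μ (q n), fun z hz => ?_⟩
  have hconst : ContinuousMap.const K (a + z • b) = .const K a + z • .const K b := rfl
  have hz' := isUnit_one_sub_scalarCoord_mul_const.2 hz
  rw [integral_mul_ringInverse_eq_compactIntegral hμ hz
      (c := ContinuousMap.const K (a + z • b) ^ l) fun s => rfl,
    integral_mul_ringInverse_eq_compactIntegral hμ hz (ringInverse_mul_const_pow_apply ha b l)]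
  rw [hconst] at hz' ⊢
  simp only [hq z hz', map_add, map_sum, map_smul]

lemma contDiffAt_integral_pow_mul_ringInverse {μ : Measure ℝ} [IsFiniteMeasure μ]
    (hμ : μ Kᶜ = 0) {a : R} (ha : ∀ s ∈ K, IsUnit (1 - (s : ℂ) • a)) (b : R) (l n : ℕ) :
    ContDiffAt ℝ n (fun t : ℝ =>
      ∫ s, ((1 - (s : ℂ) • a)⁻¹ʳ * b) ^ l * (1 - (s : ℂ) • (a + t • b))⁻¹ʳ ∂μ) 0 := by
  set c : C(K, R) := ((1 - scalarCoord * ContinuousMap.const K a)⁻¹ʳ * ContinuousMap.const K b) ^ l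
  have hsmooth : ContDiffAt ℝ n (fun t : ℝ => compactIntegral K μ
      (c * (1 - scalarCoord * (ContinuousMap.const K a + t • ContinuousMap.const K b))⁻¹ʳ)) 0 :=
    ((compactIntegral K μ).restrictScalars ℝ).contDiff.contDiffAt.comp (0 : ℝ)
      (contDiffAt_const.mul (contDiffAt_ringInverse_one_sub_mul
        (isUnit_one_sub_scalarCoord_mul_const.2 ha) (ContinuousMap.const K b) n))
  refine hsmooth.congr_of_eventuallyEq ?_
  filter_upwards [eventually_isUnit_one_sub_smul ha b] with t ht
  exact integral_mul_ringInverse_eq_compactIntegral hμ ht (ringInverse_mul_const_pow_apply ha b l)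

end CompactIntegral

section StarIntegral

variable {Ω : Type*} [MeasurableSpace Ω] {ν : Measure Ω}

lemma integral_star {E : Type*} [NormedAddCommGroup E] [NormedSpace ℝ E] [CompleteSpace E]
    [StarAddMonoid E] [NormedStarGroup E] [StarModule ℝ E] (f : Ω → E) :
    ∫ ω, star (f ω) ∂ν = star (∫ ω, f ω ∂ν) :=
  (starL' ℝ : E ≃L[ℝ] E).integral_comp_comm f

variable {R : Type*} [CStarAlgebra R]

lemma realPart_integral {f : Ω → R} (hf : Integrable f ν) :
    (ℜ (∫ ω, f ω ∂ν) : R) = ∫ ω, (ℜ (f ω) : R) ∂ν := by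
  have hstar : Integrable (fun ω => star (f ω)) ν :=
    (starL' ℝ : R ≃L[ℝ] R).toContinuousLinearMap.integrable_comp hf
  simp_rw [realPart_apply_coe, integral_smul, integral_add hf hstar, integral_star]

lemma realPart_integral_nonneg [PartialOrder R] [StarOrderedRing R] {f : Ω → R}
    (hf : ∀ᵐ ω ∂ν, 0 ≤ (ℜ (f ω) : R)) : 0 ≤ (ℜ (∫ ω, f ω ∂ν) : R) := by
  by_cases hint : Integrable f ν
  · rw [realPart_integral hint]
    exact integral_nonneg_of_ae hf
  · rw [integral_undef hint, map_zero, ZeroMemClass.coe_zero]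

end StarIntegral

section ImaginaryPart

lemma imaginaryPart_sum_I_pow_smul {E : Type*} [AddCommGroup E] [Module ℂ E] [StarAddMonoid E]
    [StarModule ℂ E] {q : ℕ → E} (M : ℕ) (hq : ∀ n < 2 * M + 1, IsSelfAdjoint (q n)) :
    (ℑ (∑ n ∈ Finset.range (2 * M + 1), Complex.I ^ n • q n) : E) =
      ∑ m ∈ Finset.Icc 1 M, (-1 : ℝ) ^ (m - 1) • q (2 * m - 1) := by
  induction M with
  | zero => simp [(hq 0 (by simp)).imaginaryPart]
  | succ M ih =>
    have hodd : (ℑ (Complex.I ^ (2 * M + 1) • q (2 * M + 1)) : E) =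
        (-1 : ℝ) ^ M • q (2 * M + 1) := by
      have hpow : Complex.I ^ (2 * M + 1) = ((-1 : ℝ) ^ M : ℝ) * Complex.I := by
        rw [pow_succ, pow_mul, Complex.I_sq]; push_cast; rfl
      rw [hpow, mul_smul, Complex.coe_smul, map_smul, imaginaryPart_I_smul,
        selfAdjoint.val_smul, (hq _ (by omega)).coe_realPart]
    have heven : (ℑ (Complex.I ^ (2 * M + 2) • q (2 * M + 2)) : E) = 0 := by
      have hpow : Complex.I ^ (2 * M + 2) = ((-1 : ℝ) ^ (M + 1) : ℝ) := by
        rw [← Nat.mul_succ, pow_mul, Complex.I_sq]; push_cast; rfl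
      rw [hpow, Complex.coe_smul, map_smul, (hq _ (by omega)).imaginaryPart, smul_zero,
        ZeroMemClass.coe_zero]
    rw [show 2 * (M + 1) + 1 = 2 * M + 1 + 1 + 1 by ring, Finset.sum_range_succ,
      Finset.sum_range_succ, map_add, map_add, AddSubgroup.coe_add, AddSubgroup.coe_add,
      ih fun n hn => hq n (by omega), hodd, heven, add_zero,
      Finset.sum_Icc_succ_top (by omega), Nat.add_sub_cancel,
      show 2 * (M + 1) - 1 = 2 * M + 1 by omega]

end ImaginaryPart

section OperatorFunction

lemma opIm_eq_imaginaryPart (Y : H →L[ℂ] H) : opIm Y = (ℑ Y : H →L[ℂ] H) := by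
  rw [imaginaryPart_apply_coe, opIm, ← Complex.coe_smul, smul_smul, mul_inv, Complex.inv_I]
  congr 1
  push_cast
  ring

lemma isSelfAdjoint_fcal (P : Polynomial ℝ) (μ : Measure ℝ) (l : ℕ) {Y : H →L[ℂ] H}
    (hY : IsSelfAdjoint Y) : IsSelfAdjoint (fcal P μ l Y) := by
  refine IsSelfAdjoint.add ?_ ?_
  · change IsSelfAdjoint (Polynomial.aeval Y (P.map (algebraMap ℝ ℂ)))
    rw [Polynomial.aeval_map_algebraMap, Polynomial.aeval_eq_sum_range]
    exact isSelfAdjoint_sum _ fun n _ => (IsSelfAdjoint.all _).smul (hY.pow n)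
  · rw [IsSelfAdjoint, ← integral_star]
    refine integral_congr_ae (.of_forall fun s => ?_)
    have hinv : IsSelfAdjoint (1 - (s : ℂ) • Y) :=
      (IsSelfAdjoint.one _).sub (IsSelfAdjoint.smul (Complex.conj_ofReal s) hY)
    have hcomm : Commute Y (1 - (s : ℂ) • Y) :=
      (Commute.one_right Y).sub_right ((Commute.refl Y).smul_right _)
    exact ((hY.pow l).commute_iff hinv.ringInverse).1 (commute_ringInverse_right (hcomm.pow_left l))

lemma isSelfAdjoint_iteratedDeriv_fcal (P : Polynomial ℝ) (μ : Measure ℝ) (l n : ℕ)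
    {A B : H →L[ℂ] H} (hA : IsSelfAdjoint A) (hB : IsSelfAdjoint B) (t : ℝ) :
    IsSelfAdjoint (iteratedDeriv n (fun t : ℝ => fcal P μ l (A + t • B)) t) := by
  rw [IsSelfAdjoint, ← congrFun (iteratedDeriv_star _ n) t]
  simp_rw [(isSelfAdjoint_fcal P μ l (hA.add ((IsSelfAdjoint.all _).smul hB))).star_eq]

variable {K : Set ℝ} {P : Polynomial ℝ} {μ : Measure ℝ} {l : ℕ} {A B : H →L[ℂ] H}

lemma realPart_integral_pow_mul_ringInverse_nonneg (hμ : μ Kᶜ = 0) (hA : IsSelfAdjoint A)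
    (hB : 0 ≤ B) (hunit : ∀ s ∈ K, IsUnit (1 - (s : ℂ) • A))
    (hunitI : ∀ s ∈ K, IsUnit (1 - (s : ℂ) • (A + Complex.I • B))) (m : ℕ) :
    0 ≤ (ℜ (∫ s, ((1 - (s : ℂ) • A)⁻¹ʳ * B) ^ (2 * m + 1) *
      (1 - (s : ℂ) • (A + Complex.I • B))⁻¹ʳ ∂μ) : H →L[ℂ] H) := by
  refine realPart_integral_nonneg ?_
  filter_upwards [mem_ae_iff.2 hμ] with s hs
  have hsplit : 1 - (s : ℂ) • (A + Complex.I • B) =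
      1 - (s : ℂ) • A - ((s : ℂ) * Complex.I) • B := by
    rw [smul_add, smul_smul, sub_sub]
  have hs' := hunitI s hs
  rw [hsplit] at hs' ⊢
  exact realPart_pow_mul_ringInverse_nonneg
    ((IsSelfAdjoint.one _).sub (IsSelfAdjoint.smul (Complex.conj_ofReal s) hA))
    (hunit s hs) hB hs' m

variable [CompactSpace K] [IsFiniteMeasure μ]

lemma exists_fcal_add_smul_eq_sum (hμ : μ Kᶜ = 0) (hP : P.degree < l)
    (hA : ∀ s ∈ K, IsUnit (1 - (s : ℂ) • A)) (B : H →L[ℂ] H) :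
    ∃ q : ℕ → H →L[ℂ] H, ∀ z : ℂ, (∀ s ∈ K, IsUnit (1 - (s : ℂ) • (A + z • B))) →
      fcal P μ l (A + z • B) = ∑ n ∈ Finset.range l, z ^ n • q n +
        z ^ l • ∫ s, ((1 - (s : ℂ) • A)⁻¹ʳ * B) ^ l * (1 - (s : ℂ) • (A + z • B))⁻¹ʳ ∂μ := by
  obtain ⟨p, hp⟩ := exists_aeval_add_smul_eq_sum A B (P := P.map Complex.ofRealHom) (l := l)
    (by rwa [Polynomial.degree_map])
  obtain ⟨q, hq⟩ := exists_integral_pow_mul_ringInverse_eq_sum hμ hA B l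
  refine ⟨fun n => p n + q n, fun z hz => ?_⟩
  rw [fcal, hp, hq z hz, ← add_assoc, ← Finset.sum_add_distrib]
  simp_rw [smul_add]

lemma fcal_add_smul_eq_taylor (hμ : μ Kᶜ = 0) (hP : P.degree < l)
    (hA : ∀ s ∈ K, IsUnit (1 - (s : ℂ) • A)) {z : ℂ}
    (hz : ∀ s ∈ K, IsUnit (1 - (s : ℂ) • (A + z • B))) :
    fcal P μ l (A + z • B) =
      ∑ n ∈ Finset.range l, z ^ n • ((n.factorial : ℝ)⁻¹ •
        iteratedDeriv n (fun t : ℝ => fcal P μ l (A + t • B)) 0) +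
      z ^ l • ∫ s, ((1 - (s : ℂ) • A)⁻¹ʳ * B) ^ l * (1 - (s : ℂ) • (A + z • B))⁻¹ʳ ∂μ := by
  obtain ⟨q, hq⟩ := exists_fcal_add_smul_eq_sum hμ hP hA B
  have hexpand : (fun t : ℝ => fcal P μ l (A + t • B)) =ᶠ[𝓝 0] fun t =>
      ∑ n ∈ Finset.range l, t ^ n • q n +
        t ^ l • ∫ s, ((1 - (s : ℂ) • A)⁻¹ʳ * B) ^ l * (1 - (s : ℂ) • (A + t • B))⁻¹ʳ ∂μ := by
    filter_upwards [eventually_isUnit_one_sub_smul hA B] with t ht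
    simpa only [← Complex.ofReal_pow, Complex.coe_smul] using
      hq t (by simpa only [Complex.coe_smul] using ht)
  rw [hq z hz]
  refine congrArg (· + _) (Finset.sum_congr rfl fun n hn => ?_)
  rw [iteratedDeriv_eq_factorial_smul_of_eventuallyEq (Finset.mem_range.1 hn)
    (contDiffAt_integral_pow_mul_ringInverse hμ hA B l n) hexpand,
    inv_smul_smul₀ (Nat.cast_ne_zero.2 n.factorial_ne_zero)]

theorem sum_iteratedDeriv_le_opIm_fcal {M : ℕ} (hM : Even M) (hP : P.degree < (2 * M + 1 : ℕ))
    (hμ : μ Kᶜ = 0) (hA : IsSelfAdjoint A) (hB : 0 ≤ B)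
    (hunit : ∀ s ∈ K, IsUnit (1 - (s : ℂ) • A))
    (hunitI : ∀ s ∈ K, IsUnit (1 - (s : ℂ) • (A + Complex.I • B))) :
    ∑ m ∈ Finset.Icc 1 M, ((-1 : ℝ) ^ (m - 1) / ((2 * m - 1).factorial : ℝ)) •
        iteratedDeriv (2 * m - 1) (fun t : ℝ => fcal P μ (2 * M + 1) (A + t • B)) 0 ≤
      opIm (fcal P μ (2 * M + 1) (A + Complex.I • B)) := by
  have hIpow : Complex.I ^ (2 * M + 1) = Complex.I := by
    rw [pow_succ, pow_mul, Complex.I_sq, hM.neg_one_pow, one_mul]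
  have hderiv (n : ℕ) := isSelfAdjoint_iteratedDeriv_fcal P μ (2 * M + 1) n hA (.of_nonneg hB) 0
  rw [opIm_eq_imaginaryPart, fcal_add_smul_eq_taylor hμ hP hunit hunitI, map_add,
    AddSubgroup.coe_add, hIpow, imaginaryPart_I_smul,
    imaginaryPart_sum_I_pow_smul M fun n _ => (IsSelfAdjoint.all _).smul (hderiv n)]
  simp_rw [smul_smul, ← div_eq_mul_inv]
  exact le_add_of_nonneg_right
    (realPart_integral_pow_mul_ringInverse_nonneg hμ hA hB hunit hunitI M)

end OperatorFunction

theorem stmt10_general (k : ℕ) (hk : 1 ≤ k) (P : Polynomial ℝ)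
    (hP : P.degree < ((4 * k - 3 : ℕ) : WithBot ℕ))
    (μ : Measure ℝ) [IsFiniteMeasure μ] (hμ : μ (Set.Icc (-1 : ℝ) 1)ᶜ = 0)
    (A B X : H →L[ℂ] H) (hA : IsSelfAdjoint A) (hBpos : B.IsPositive)
    (hspA : spectrum ℂ A ⊆ (fun x : ℝ => (x : ℂ)) '' Set.Ioo (-1 : ℝ) 1)
    (hX : X = A + Complex.I • B) :
    (∀ s ∈ Set.Icc (-1 : ℝ) 1, IsUnit (1 - (s : ℂ) • X)) ∧
    (∃ δ > (0 : ℝ), ∀ t : ℝ, |t| < δ →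
        ∀ s ∈ Set.Icc (-1 : ℝ) 1, IsUnit (1 - (s : ℂ) • (A + t • B))) ∧
    Integrable (fun s : ℝ => X ^ (4 * k - 3) * Ring.inverse (1 - (s : ℂ) • X)) μ ∧
    (∃ δ > (0 : ℝ), ∀ t : ℝ, |t| < δ →
        Integrable
          (fun s : ℝ =>
            (A + t • B) ^ (4 * k - 3) * Ring.inverse (1 - (s : ℂ) • (A + t • B))) μ) ∧
    (opIm (fcal P μ (4 * k - 3) X)
      - ∑ m ∈ Finset.Icc 1 (2 * k - 2),
          ((-1 : ℝ) ^ (m - 1) / (Nat.factorial (2 * m - 1) : ℝ)) •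
            iteratedDeriv (2 * m - 1)
              (fun t : ℝ => fcal P μ (4 * k - 3) (A + t • B)) 0).IsPositive := by
  subst hX
  have hnorm : ‖A‖ < 1 := norm_lt_one_of_spectrum_subset hA hspA
  have hunit : ∀ s ∈ Set.Icc (-1 : ℝ) 1, IsUnit (1 - (s : ℂ) • A) := fun s hs => by
    simpa only [smul_zero, add_zero] using isUnit_one_sub_smul_add_I_smul hnorm (.zero _) hs
  have hunitI : ∀ s ∈ Set.Icc (-1 : ℝ) 1, IsUnit (1 - (s : ℂ) • (A + Complex.I • B)) :=
    fun s => isUnit_one_sub_smul_add_I_smul hnorm hBpos.isSelfAdjoint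
  obtain ⟨δ, hδ, hline⟩ : ∃ δ > (0 : ℝ), ∀ t : ℝ, |t| < δ →
      ∀ s ∈ Set.Icc (-1 : ℝ) 1, IsUnit (1 - (s : ℂ) • (A + t • B)) := by
    simpa only [Real.dist_0_eq_abs] using
      Metric.eventually_nhds_iff.1 (eventually_isUnit_one_sub_smul hunit B)
  refine ⟨hunitI, ⟨δ, hδ, hline⟩, integrable_mul_ringInverse_one_sub_smul hμ _ hunitI,
    ⟨δ, hδ, fun t ht => integrable_mul_ringInverse_one_sub_smul hμ _ (hline t ht)⟩, ?_⟩
  have hl : 4 * k - 3 = 2 * (2 * k - 2) + 1 := by omega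
  have hM : Even (2 * k - 2) := ⟨k - 1, by omega⟩
  rw [hl] at hP ⊢
  rw [← ContinuousLinearMap.le_def]
  exact sum_iteratedDeriv_le_opIm_fcal hM hP hμ hA
    ((ContinuousLinearMap.nonneg_iff_isPositive B).2 hBpos) hunit hunitI

/-- The `(4k−3)`-tone case of the main theorem: for `f(Y) = P(Y) + ∫ Y^{4k−3}(I−λY)⁻¹ dμ(λ)`
with `deg P < 4k−3` and `μ` a finite positive measure on `[−1,1]`, all the relevant operators
are invertible, the Bochner integrals exist, and, for `X = A + iB` with `B ≥ 0`,
`Im f(X) ≥ Σ_{m=1}^{2k−2} ((−1)^{m−1}/(2m−1)!) D^{2m−1}f(A;B)` (the sum being `0` when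
`k = 1`). -/
theorem stmt10 [TopologicalSpace.SeparableSpace H] (hinf : ¬ FiniteDimensional ℂ H)
    (k : ℕ) (hk : 1 ≤ k) (P : Polynomial ℝ) (hP : P.degree < ((4 * k - 3 : ℕ) : WithBot ℕ))
    (μ : Measure ℝ) [IsFiniteMeasure μ] (hμ : μ (Set.Icc (-1 : ℝ) 1)ᶜ = 0)
    (A B X : H →L[ℂ] H) (hA : IsSelfAdjoint A) (hB : IsSelfAdjoint B)
    (hBpos : B.IsPositive)
    (hspA : spectrum ℂ A ⊆ (fun x : ℝ => (x : ℂ)) '' Set.Ioo (-1 : ℝ) 1)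
    (hX : X = A + Complex.I • B) :
    (∀ s ∈ Set.Icc (-1 : ℝ) 1, IsUnit (1 - (s : ℂ) • X)) ∧
    (∃ δ > (0 : ℝ), ∀ t : ℝ, |t| < δ →
        ∀ s ∈ Set.Icc (-1 : ℝ) 1, IsUnit (1 - (s : ℂ) • (A + t • B))) ∧
    Integrable (fun s : ℝ => X ^ (4 * k - 3) * Ring.inverse (1 - (s : ℂ) • X)) μ ∧
    (∃ δ > (0 : ℝ), ∀ t : ℝ, |t| < δ →
        Integrable
          (fun s : ℝ =>
            (A + t • B) ^ (4 * k - 3) * Ring.inverse (1 - (s : ℂ) • (A + t • B))) μ) ∧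
    (opIm (fcal P μ (4 * k - 3) X)
      - ∑ m ∈ Finset.Icc 1 (2 * k - 2),
          ((-1 : ℝ) ^ (m - 1) / (Nat.factorial (2 * m - 1) : ℝ)) •
            iteratedDeriv (2 * m - 1)
              (fun t : ℝ => fcal P μ (4 * k - 3) (A + t • B)) 0).IsPositive :=
  stmt10_general k hk P hP μ hμ A B X hA hBpos hspA hX
end

section
/- Let c ∈ ℝ and let μ be a nonzero finite positive Borel measure on [−1, 1]. Let X = A + iB, where A and B are bounded self-adjoint operators on H and B is positive and invertible. Then for every λ ∈ [−1, 1] the operator I − λX is invertible; for λ ≠ 0, Im{X(I − λX)^{-1}} = B^{-1/2}(C_λ² + λ²I)^{-1}B^{-1/2} where C_λ := B^{-1/2}(I − λA)B^{-1/2}; and the operator Im{ cI + ∫_{[−1,1]} X(I − λX)^{-1} dμ(λ) } (Bochner integral) is positive and invertible. -/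
open ContinuousLinearMap MeasureTheory

variable {H : Type*} [NormedAddCommGroup H] [InnerProductSpace ℂ H] [CompleteSpace H]

/-- The inverse square root `T^{-1/2}` of a (positive invertible) operator, via the
continuous functional calculus. -/
noncomputable def invSqrt (T : H →L[ℂ] H) : H →L[ℂ] H := cfc (fun x : ℝ => (Real.sqrt x)⁻¹) T

/-!
Conjugating `x` by `n = (Im x)^{-1/2}` gives `n x n = c + i` with `c` self-adjoint, so `x` is
invertible as soon as `Im x` is strictly positive. Applied to `± (1 - s x)` with `s ≠ 0`, this makes
`r = 1 - s x` invertible. Moreover `Im (x r⁻¹) = (r⁻¹)* (Im x) r⁻¹` is congruent to `Im x`, hence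
strictly positive, and rewriting `r⁻¹` as `n (n r n)⁻¹ n` turns this identity into the stated
formula. The integrand is `-(s - x⁻¹)⁻¹`, a resolvent, which is continuous and vanishes at infinity;
so it is integrable, and strict positivity of its imaginary part passes to the integral.
-/

open scoped ComplexStarModule
open Complex Filter Topology

lemma inverse_eq_mul_inverse_conjugate_mul {M : Type*} [MonoidWithZero M] {n : M} (hn : IsUnit n)
    (r : M) : Ring.inverse r = n * Ring.inverse (n * r * n) * n := by
  rw [Ring.inverse_mul (.inr hn), Ring.inverse_mul (.inl hn), Ring.mul_inverse_cancel_left _ _ hn,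
    Ring.inverse_mul_cancel_right _ _ hn]

lemma inverse_neg_eq_neg_inverse {R : Type*} [Ring R] (a : R) :
    Ring.inverse (-a) = -Ring.inverse a := by
  have h_neg_one : Ring.inverse (-1 : R) = -1 := by simpa using Ring.inverse_unit (-1 : Rˣ)
  rw [← neg_one_mul, Ring.inverse_mul (.inl isUnit_one.neg), h_neg_one, mul_neg_one]

lemma mul_inverse_one_sub_smul_eq_neg_resolvent {𝕜 R : Type*} [CommRing 𝕜] [Ring R]
    [Algebra 𝕜 R] {x : R} (hx : IsUnit x) (s : 𝕜) :
    x * Ring.inverse (1 - s • x) = -resolvent (Ring.inverse x) s := by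
  have h_factor : 1 - s • x = -(algebraMap 𝕜 R s - Ring.inverse x) * x := by
    rw [neg_sub, sub_mul, Ring.inverse_mul_cancel x hx, Algebra.algebraMap_eq_smul_one,
      smul_mul_assoc, one_mul]
  rw [h_factor, Ring.inverse_mul (.inr hx), Ring.mul_inverse_cancel_left _ _ hx,
    inverse_neg_eq_neg_inverse, resolvent]

section StarAlgebra

variable {R : Type*} [Ring R] [StarRing R] [Algebra ℂ R] [StarModule ℂ R]

lemma coe_imaginaryPart_conjugate (x y : R) :
    (ℑ (star y * x * y) : R) = star y * ℑ x * y := by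
  simp only [imaginaryPart_apply_coe, star_mul, star_star, mul_smul_comm, smul_mul_assoc,
    mul_sub, sub_mul, mul_assoc]

/- With `r = 1 - s x` one has `x r⁻¹ = (r⁻¹)* (r* x) r⁻¹` and `r* x = x - s x* x`, where `x* x` is
self-adjoint. -/
lemma coe_imaginaryPart_mul_inverse_one_sub_smul {x : R} {s : ℝ}
    (hs : IsUnit (1 - (s : ℂ) • x)) :
    (ℑ (x * Ring.inverse (1 - (s : ℂ) • x)) : R) =
      star (Ring.inverse (1 - (s : ℂ) • x)) * ℑ x * Ring.inverse (1 - (s : ℂ) • x) := by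
  set r := 1 - (s : ℂ) • x with hr
  have h_im : ℑ (star r * x) = ℑ x := by
    have h_expand : star r * x = x - (s : ℂ) • (star x * x) := by
      simp [hr, sub_mul]
    rw [h_expand, map_sub, imaginaryPart_smul, (IsSelfAdjoint.star_mul_self x).imaginaryPart]
    simp
  have h_conj : x * Ring.inverse r = star (Ring.inverse r) * (star r * x) * Ring.inverse r := by
    rw [← mul_assoc, ← star_mul, Ring.mul_inverse_cancel r hs, star_one, one_mul]
  rw [h_conj, coe_imaginaryPart_conjugate, h_im]

lemma conjugate_eq_add_I_smul_one {n x : R} (hn : n * ℑ x * n = 1) :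
    n * x * n = n * ℜ x * n + I • 1 := by
  conv_lhs => rw [← realPart_add_I_smul_imaginaryPart x]
  rw [mul_add, add_mul, mul_smul_comm, smul_mul_assoc, hn]

lemma conjugate_one_sub_smul {n x : R} (hn : n * ℑ x * n = 1) (z : ℂ) :
    n * (1 - z • x) * n = n * (1 - z • (ℜ x : R)) * n - (z * I) • 1 := by
  simp only [mul_sub, sub_mul, mul_smul_comm, smul_mul_assoc, conjugate_eq_add_I_smul_one hn,
    smul_add, smul_smul]
  abel

lemma sub_smul_I_mul_star {c : R} (hc : IsSelfAdjoint c) (s : ℝ) :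
    (c - ((s : ℂ) * I) • 1) * star (c - ((s : ℂ) * I) • 1) = c ^ 2 + (s ^ 2 : ℝ) • 1 := by
  have h_sq : (s : ℂ) * I * (s * I) = -((s ^ 2 : ℝ) : ℂ) := by
    push_cast
    linear_combination (s : ℂ) ^ 2 * I_mul_I
  have h_star : star (c - ((s : ℂ) * I) • 1) = c + ((s : ℂ) * I) • 1 := by
    simp [hc.star_eq]
  calc (c - ((s : ℂ) * I) • 1) * star (c - ((s : ℂ) * I) • 1)
      = c ^ 2 - ((s : ℂ) * I * (s * I)) • 1 := by
        rw [h_star]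
        simp only [sub_mul, mul_add, mul_smul_comm, smul_mul_assoc, smul_sub, smul_smul,
          mul_one, one_mul, pow_two]
        abel
    _ = c ^ 2 + (s ^ 2 : ℝ) • 1 := by rw [h_sq, neg_smul, sub_neg_eq_add, coe_smul]

lemma coe_imaginaryPart_mul_inverse_one_sub_smul_eq_conjugate {n x : R} (hn_sa : IsSelfAdjoint n)
    (hn : n * ℑ x * n = 1) {s : ℝ} (hs : IsUnit (1 - (s : ℂ) • x)) :
    (ℑ (x * Ring.inverse (1 - (s : ℂ) • x)) : R) =
      n * Ring.inverse ((n * (1 - (s : ℂ) • (ℜ x : R)) * n) ^ 2 + (s ^ 2 : ℝ) • 1) * n := by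
  have hn_unit : IsUnit n :=
    isUnit_iff_exists_and_exists.2 ⟨⟨ℑ x * n, by rw [← mul_assoc, hn]⟩, ⟨n * ℑ x, hn⟩⟩
  set r := 1 - (s : ℂ) • x
  set c := n * (1 - (s : ℂ) • (ℜ x : R)) * n
  have hc : IsSelfAdjoint c := by
    simp [c, isSelfAdjoint_iff, hn_sa.star_eq, mul_assoc]
  have h_sq : n * r * n * star (n * r * n) = c ^ 2 + (s ^ 2 : ℝ) • 1 := by
    rw [conjugate_one_sub_smul hn, sub_smul_I_mul_star hc]
  have h_inv := inverse_eq_mul_inverse_conjugate_mul hn_unit r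
  set d := n * r * n
  have hd : IsUnit d := (hn_unit.mul hs).mul hn_unit
  calc (ℑ (x * Ring.inverse r) : R)
      = star (Ring.inverse r) * ℑ x * Ring.inverse r :=
        coe_imaginaryPart_mul_inverse_one_sub_smul hs
    _ = n * (star (Ring.inverse d) * (n * ℑ x * n) * Ring.inverse d) * n := by
        simp only [h_inv, star_mul, hn_sa.star_eq, mul_assoc]
    _ = n * Ring.inverse (d * star d) * n := by
        rw [hn, mul_one, Ring.inverse_mul (.inl hd), Ring.inverse_star]
    _ = n * Ring.inverse (c ^ 2 + (s ^ 2 : ℝ) • 1) * n := by rw [h_sq]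

lemma coe_realPart_add_I_smul {a b : R} (ha : IsSelfAdjoint a) (hb : IsSelfAdjoint b) :
    (ℜ (a + I • b) : R) = a := by
  simp [ha.coe_realPart, hb.imaginaryPart]

lemma coe_imaginaryPart_add_I_smul {a b : R} (ha : IsSelfAdjoint a) (hb : IsSelfAdjoint b) :
    (ℑ (a + I • b) : R) = b := by
  simp [ha.imaginaryPart, hb.coe_realPart]

end StarAlgebra

section Integral

variable {E Ω : Type*} [NormedAddCommGroup E] [NormedSpace ℂ E] [StarAddMonoid E] [StarModule ℂ E]
  [ContinuousStar E] [MeasurableSpace Ω] {μ : Measure Ω} {f : Ω → E}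

lemma integrable_star (hf : Integrable f μ) : Integrable (fun ω => star (f ω)) μ :=
  (starL' ℝ : E ≃L[ℝ] E).integrable_comp_iff.2 hf

lemma integrable_coe_imaginaryPart (hf : Integrable f μ) :
    Integrable (fun ω => (ℑ (f ω) : E)) μ := by
  simpa only [imaginaryPart_apply_coe] using!
    ((hf.sub (integrable_star hf)).smul (2⁻¹ : ℝ)).smul (-I)

lemma coe_imaginaryPart_integral (hf : Integrable f μ) :
    (ℑ (∫ ω, f ω ∂μ) : E) = ∫ ω, (ℑ (f ω) : E) ∂μ := by
  have h_integral_star : ∫ ω, star (f ω) ∂μ = star (∫ ω, f ω ∂μ) :=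
    (starL' ℝ : E ≃L[ℝ] E).integral_comp_comm f
  simp only [imaginaryPart_apply_coe]
  rw [integral_smul, integral_smul, integral_sub hf (integrable_star hf), h_integral_star]

end Integral

section BanachAlgebra

variable {𝒜 : Type*} [NormedRing 𝒜] [NormedAlgebra ℂ 𝒜] [CompleteSpace 𝒜]

lemma continuous_mul_inverse_one_sub_smul {x : 𝒜} (hs : ∀ s : ℝ, IsUnit (1 - (s : ℂ) • x)) :
    Continuous fun s : ℝ => x * Ring.inverse (1 - (s : ℂ) • x) := by
  refine continuous_const.mul (continuous_iff_continuousAt.2 fun s => ?_)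
  have h_inv : ContinuousAt Ring.inverse (1 - (s : ℂ) • x) :=
    NormedRing.inverse_continuousAt (hs s).unit
  exact h_inv.comp (f := fun s : ℝ => 1 - (s : ℂ) • x) (by fun_prop)

lemma integrable_mul_inverse_one_sub_smul {x : 𝒜} (hx : IsUnit x)
    (hs : ∀ s : ℝ, IsUnit (1 - (s : ℂ) • x)) (μ : Measure ℝ) [IsFiniteMeasure μ] :
    Integrable (fun s : ℝ => x * Ring.inverse (1 - (s : ℂ) • x)) μ := by
  have h_cont := continuous_mul_inverse_one_sub_smul hs
  have h_lim : Tendsto (fun s : ℝ => x * Ring.inverse (1 - (s : ℂ) • x)) (cocompact ℝ) (𝓝 0) := by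
    have h_cob : Tendsto ((↑) : ℝ → ℂ) (cocompact ℝ) (Bornology.cobounded ℂ) := by
      rw [Metric.cobounded_eq_cocompact]
      exact isometry_ofReal.isClosedEmbedding.tendsto_cocompact
    simpa only [mul_inverse_one_sub_smul_eq_neg_resolvent hx, neg_zero] using!
      ((spectrum.resolvent_tendsto_cobounded (Ring.inverse x)).comp h_cob).neg
  let f : ZeroAtInftyContinuousMap ℝ 𝒜 := ⟨⟨_, h_cont⟩, h_lim⟩
  exact .of_bound h_cont.aestronglyMeasurable ‖f.toBCF‖ (.of_forall f.toBCF.norm_coe_le_norm)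

end BanachAlgebra

section CStarAlgebra

variable {𝒜 : Type*} [CStarAlgebra 𝒜]

lemma isUnit_add_I_smul_one {a : 𝒜} (ha : IsSelfAdjoint a) : IsUnit (a + I • (1 : 𝒜)) := by
  have h : -I ∉ spectrum ℂ a := fun h => by simpa using ha.im_eq_zero_of_mem_spectrum h
  simpa [Algebra.algebraMap_eq_smul_one, add_comm, sub_eq_add_neg] using
    (spectrum.notMem_iff.1 h).neg

variable [PartialOrder 𝒜] [StarOrderedRing 𝒜]

lemma isUnit_of_isStrictlyPositive_imaginaryPart {x : 𝒜} (hx : IsStrictlyPositive (ℑ x : 𝒜)) :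
    IsUnit x := by
  set n := (ℑ x : 𝒜) ^ (-(1 / 2) : ℝ)
  have hn_sa : IsSelfAdjoint n := CFC.rpow_nonneg.isSelfAdjoint
  have hn_unit : IsUnit n := (hx.rpow ..).isUnit
  have h_conj := conjugate_eq_add_I_smul_one (CFC.conjugate_rpow_neg_one_half (ℑ x : 𝒜))
  have h_unit : IsUnit (n * x * n) :=
    h_conj ▸ isUnit_add_I_smul_one ((ℜ x).2.conjugate_self hn_sa)
  rwa [hn_unit.mul_right_iff, hn_unit.mul_left_iff] at h_unit

lemma isUnit_one_sub_smul {x : 𝒜} (hx : IsStrictlyPositive (ℑ x : 𝒜)) (s : ℝ) :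
    IsUnit (1 - (s : ℂ) • x) := by
  have h_pos : ∀ t : ℝ, 0 < t → ∀ c : ℝ, IsUnit ((c : ℂ) • 1 + (t : ℂ) • x) := fun t ht c => by
    refine isUnit_of_isStrictlyPositive_imaginaryPart ?_
    simpa [imaginaryPart_smul, (IsSelfAdjoint.one 𝒜).imaginaryPart] using hx.smul ht
  rcases lt_trichotomy s 0 with hs | rfl | hs
  · simpa [sub_eq_add_neg] using h_pos (-s) (neg_pos.2 hs) 1
  · simp
  · simpa [sub_eq_add_neg, add_comm] using (h_pos s hs (-1)).neg

lemma isStrictlyPositive_imaginaryPart_mul_inverse_one_sub_smul {x : 𝒜}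
    (hx : IsStrictlyPositive (ℑ x : 𝒜)) (s : ℝ) :
    IsStrictlyPositive (ℑ (x * Ring.inverse (1 - (s : ℂ) • x)) : 𝒜) := by
  have hs := isUnit_one_sub_smul hx s
  rw [coe_imaginaryPart_mul_inverse_one_sub_smul hs]
  exact hs.ringInverse.isStrictlyPositive_star_left_conjugate_iff.2 hx

lemma exists_nat_inv_smul_one_le {a : 𝒜} (ha : IsStrictlyPositive a) :
    ∃ n : ℕ, ((n : ℝ) + 1)⁻¹ • (1 : 𝒜) ≤ a := by
  cases subsingleton_or_nontrivial 𝒜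
  · exact ⟨0, (Subsingleton.elim _ _).le⟩
  obtain ⟨r, hr, hra⟩ :=
    (CFC.exists_pos_algebraMap_le_iff ha.isSelfAdjoint).2 fun x hx => ha.spectrum_pos hx
  obtain ⟨n, hn⟩ := exists_nat_one_div_lt hr
  rw [one_div] at hn
  rw [Algebra.algebraMap_eq_smul_one] at hra
  exact ⟨n, (smul_le_smul_of_nonneg_right hn.le zero_le_one).trans hra⟩

lemma measure_lt_top_of_smul_one_le [Nontrivial 𝒜] {Ω : Type*} [MeasurableSpace Ω] {μ : Measure Ω}
    {f : Ω → 𝒜} (hf : Integrable f μ) {r : ℝ} (hr : 0 < r) : μ {ω | r • (1 : 𝒜) ≤ f ω} < ⊤ := by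
  have h_norm {ω : Ω} (hω : r • (1 : 𝒜) ≤ f ω) : r ≤ ‖f ω‖ := by
    simpa [norm_smul, abs_of_pos hr] using
      CStarAlgebra.norm_le_norm_of_nonneg_of_le (smul_nonneg hr.le zero_le_one) hω
  exact (measure_mono fun ω => h_norm).trans_lt (hf.measure_norm_ge_lt_top hr)

/- Countably many of the sets `{f ≥ 1 / (n + 1)}` cover almost all of the space, so one of them
has positive measure, and it alone already makes the integral strictly positive. -/
lemma isStrictlyPositive_integral {Ω : Type*} [MeasurableSpace Ω] {μ : Measure Ω} (hμ : μ ≠ 0)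
    {f : Ω → 𝒜} (hf : Integrable f μ) (hpos : ∀ᵐ ω ∂μ, IsStrictlyPositive (f ω)) :
    IsStrictlyPositive (∫ ω, f ω ∂μ) := by
  nontriviality 𝒜
  let E (n : ℕ) : Set Ω := {ω | ((n : ℝ) + 1)⁻¹ • (1 : 𝒜) ≤ f ω}
  have h_cover : μ (⋃ n, E n) ≠ 0 := by
    have h_ae : ∀ᵐ ω ∂μ, ω ∈ ⋃ n, E n :=
      hpos.mono fun ω hω => Set.mem_iUnion.2 (exists_nat_inv_smul_one_le hω)
    rwa [measure_congr (s := ⋃ n, E n) (eventuallyEq_univ.2 h_ae), Measure.measure_univ_ne_zero]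
  obtain ⟨n, hn⟩ := exists_measure_pos_of_not_measure_iUnion_null h_cover
  have h_finite : μ (E n) ≠ ⊤ := (measure_lt_top_of_smul_one_le hf (by positivity)).ne
  have h_meas : NullMeasurableSet (E n) μ :=
    aestronglyMeasurable_const.nullMeasurableSet_le hf.aestronglyMeasurable
  have h_lower : μ.real (E n) • ((n : ℝ) + 1)⁻¹ • (1 : 𝒜) ≤ ∫ ω, f ω ∂μ :=
    calc μ.real (E n) • ((n : ℝ) + 1)⁻¹ • (1 : 𝒜)
        = ∫ _ in E n, ((n : ℝ) + 1)⁻¹ • (1 : 𝒜) ∂μ := (setIntegral_const _).symm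
      _ ≤ ∫ ω in E n, f ω ∂μ :=
        setIntegral_mono_on₀ (integrableOn_const h_finite) hf.integrableOn h_meas fun _ => id
      _ ≤ ∫ ω, f ω ∂μ := setIntegral_le_integral hf (hpos.mono fun _ => IsStrictlyPositive.nonneg)
  have h_real : 0 < μ.real (E n) := ENNReal.toReal_pos hn.ne' h_finite
  exact (isStrictlyPositive_one.smul (by positivity) |>.smul h_real).of_le h_lower

end CStarAlgebra

theorem stmt13_general {𝒜 : Type*} [CStarAlgebra 𝒜] [PartialOrder 𝒜] [StarOrderedRing 𝒜]
    (c : ℝ) (μ : Measure ℝ) [IsFiniteMeasure μ] (hμ0 : μ ≠ 0)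
    {x : 𝒜} (hx : IsStrictlyPositive (ℑ x : 𝒜)) :
    (∀ s : ℝ, IsUnit (1 - (s : ℂ) • x)) ∧
    (∀ s : ℝ,
      (ℑ (x * Ring.inverse (1 - (s : ℂ) • x)) : 𝒜) =
        (ℑ x : 𝒜) ^ (-(1 / 2) : ℝ) *
          Ring.inverse
            (((ℑ x : 𝒜) ^ (-(1 / 2) : ℝ) * (1 - (s : ℂ) • (ℜ x : 𝒜)) *
              (ℑ x : 𝒜) ^ (-(1 / 2) : ℝ)) ^ 2 + (s ^ 2 : ℝ) • 1) *
          (ℑ x : 𝒜) ^ (-(1 / 2) : ℝ)) ∧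
    Integrable (fun s : ℝ => x * Ring.inverse (1 - (s : ℂ) • x)) μ ∧
    IsStrictlyPositive
      (ℑ ((c : ℂ) • 1 + ∫ s, x * Ring.inverse (1 - (s : ℂ) • x) ∂μ) : 𝒜) := by
  have h_int := integrable_mul_inverse_one_sub_smul
    (isUnit_of_isStrictlyPositive_imaginaryPart hx) (isUnit_one_sub_smul hx) μ
  refine ⟨isUnit_one_sub_smul hx, fun s => ?_, h_int, ?_⟩
  · exact coe_imaginaryPart_mul_inverse_one_sub_smul_eq_conjugate CFC.rpow_nonneg.isSelfAdjoint
      (CFC.conjugate_rpow_neg_one_half (ℑ x : 𝒜)) (isUnit_one_sub_smul hx s)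
  have h_const : ℑ ((c : ℂ) • (1 : 𝒜)) = 0 := by
    simp [(IsSelfAdjoint.one 𝒜).imaginaryPart]
  rw [map_add, h_const, zero_add, coe_imaginaryPart_integral h_int]
  exact isStrictlyPositive_integral hμ0 (integrable_coe_imaginaryPart h_int)
    (.of_forall (isStrictlyPositive_imaginaryPart_mul_inverse_one_sub_smul hx))

lemma opIm_eq_coe_imaginaryPart (Y : H →L[ℂ] H) : opIm Y = ℑ Y := by
  rw [opIm, imaginaryPart_apply_coe, ← Complex.coe_smul, smul_smul]
  congr 1
  simp [mul_comm]

lemma invSqrt_eq_rpow_neg_half {T : H →L[ℂ] H} (hT : 0 ≤ T) : invSqrt T = T ^ (-(1 / 2) : ℝ) := by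
  rw [CFC.rpow_eq_cfc_real, invSqrt]
  refine cfc_congr fun t ht => ?_
  rw [Real.rpow_neg (spectrum_nonneg_of_nonneg hT ht), Real.sqrt_eq_rpow]

/-- Strict positivity of the imaginary part of `f(X)` for a non-constant operator monotone
function `f(x) = c + ∫_{[−1,1]} x/(1−λx) dμ(λ)` and `Im X > 0`: for `X = A + iB` with `B`
positive invertible, all `I − λX` are invertible, for `λ ≠ 0` one has
`Im{X(I−λX)⁻¹} = B^{-1/2}(C_λ² + λ²I)⁻¹B^{-1/2}` with `C_λ = B^{-1/2}(I−λA)B^{-1/2}`, and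
`Im{cI + ∫ X(I−λX)⁻¹ dμ(λ)}` is positive and invertible. -/
theorem stmt13 [TopologicalSpace.SeparableSpace H] (hinf : ¬ FiniteDimensional ℂ H)
    (c : ℝ) (μ : Measure ℝ) [IsFiniteMeasure μ] (hμ0 : μ ≠ 0)
    (hμs : μ (Set.Icc (-1 : ℝ) 1)ᶜ = 0)
    (A B X : H →L[ℂ] H) (hA : IsSelfAdjoint A) (hB : IsSelfAdjoint B)
    (hBpos : B.IsPositive) (hBU : IsUnit B) (hX : X = A + Complex.I • B) :
    (∀ s ∈ Set.Icc (-1 : ℝ) 1, IsUnit (1 - (s : ℂ) • X)) ∧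
    (∀ s ∈ Set.Icc (-1 : ℝ) 1, s ≠ 0 →
      opIm (X * Ring.inverse (1 - (s : ℂ) • X)) =
        invSqrt B *
          Ring.inverse
            ((invSqrt B * (1 - (s : ℂ) • A) * invSqrt B) ^ 2 + (s ^ 2 : ℝ) • 1) *
          invSqrt B) ∧
    Integrable (fun s : ℝ => X * Ring.inverse (1 - (s : ℂ) • X)) μ ∧
    (opIm ((c : ℂ) • 1 + ∫ s, X * Ring.inverse (1 - (s : ℂ) • X) ∂μ)).IsPositive ∧
    IsUnit (opIm ((c : ℂ) • 1 + ∫ s, X * Ring.inverse (1 - (s : ℂ) • X) ∂μ)) := by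
  have h_re : (ℜ X : H →L[ℂ] H) = A := hX ▸ coe_realPart_add_I_smul hA hB
  have h_im : (ℑ X : H →L[ℂ] H) = B := hX ▸ coe_imaginaryPart_add_I_smul hA hB
  have hB_nonneg : 0 ≤ B := (nonneg_iff_isPositive B).2 hBpos
  have hx : IsStrictlyPositive (ℑ X : H →L[ℂ] H) := by
    rw [h_im]; exact hBU.isStrictlyPositive hB_nonneg
  have h := stmt13_general c μ hμ0 hx
  simp only [h_re, h_im, ← opIm_eq_coe_imaginaryPart, ← invSqrt_eq_rpow_neg_half hB_nonneg] at h
  obtain ⟨h_unit, h_formula, h_int, h_pos⟩ := h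
  exact ⟨fun s _ => h_unit s, fun s _ _ => h_formula s, h_int,
    (nonneg_iff_isPositive _).1 h_pos.nonneg, h_pos.isUnit⟩
end

section
/- Let f₁, c ∈ ℝ, γ ≥ 0, and let μ be a positive Borel measure on [0, ∞) with ∫_{[0,∞)} (1 + λ)^{-1} dμ(λ) < ∞. Define F(z) := f₁ + c(z − 1) + γ(z − 1)² + ∫_{[0,∞)} (z − 1)²/(z + λ) dμ(λ) for complex z with Re z > 0. If Re F(z) ≥ 0 for every z ∈ ℂ with Re z > 0, then γ = 0, ∫_{[0,∞)} (1 + λ) dμ(λ) ≤ f₁ < ∞, and there exist α ≥ 0 and β ≥ 0 such that F(x) = α + βx + ∫_{[0,∞)} (1 + λ)²/(x + λ) dμ(λ) for all real x > 0. -/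
open MeasureTheory

/-- The analytic function
`F(z) = f₁ + c(z−1) + γ(z−1)² + ∫_{[0,∞)} (z−1)²/(z+λ) dμ(λ)` on `{Re z > 0}`. -/
noncomputable def Ffun (f₁ c γ : ℝ) (μ : Measure ℝ) (z : ℂ) : ℂ :=
  (f₁ : ℂ) + (c : ℂ) * (z - 1) + (γ : ℂ) * (z - 1) ^ 2 +
    ∫ l, (z - 1) ^ 2 / (z + (l : ℂ)) ∂μ

/-!
On the line `z = 1 + iy` one has
`Re F(z) = f₁ - γ y² - ∫ y² (1 + λ) / ((1 + λ)² + y²) dμ(λ)`, so positivity there forces `γ = 0`,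
and, because the integrand increases to `1 + λ` as `y → ∞`, it forces `∫ (1 + λ) dμ ≤ f₁`. This
makes every term of the partial fraction decomposition
`(z - 1)² / (z + λ) = (z - 1) - (1 + λ) + (1 + λ)² / (z + λ)` integrable, whence
`F(z) = α + β z + ∫ (1 + λ)² / (z + λ) dμ(λ)`. The last integral vanishes at infinity along each
vertical line `Re z = x > 0`, so `α + β x ≥ 0` for all `x > 0`, that is, `α, β ≥ 0`.
-/

open Filter Topology Bornology

theorem nonneg_and_nonneg_of_forall_pos_nonneg_add_mul {K : Type*} [Field K] [LinearOrder K]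
    [IsStrictOrderedRing K] {a b : K} (h : ∀ x, 0 < x → 0 ≤ a + b * x) : 0 ≤ a ∧ 0 ≤ b := by
  constructor
  · by_contra! ha
    have hb : 0 < |b| + 1 := by positivity
    have hx := h (-a / (|b| + 1)) (div_pos (neg_pos.2 ha) hb)
    have hsum : a + b * (-a / (|b| + 1)) = a * (|b| + 1 - b) / (|b| + 1) := by
      field_simp
      ring
    have hneg : a * (|b| + 1 - b) / (|b| + 1) < 0 :=
      div_neg_of_neg_of_pos (mul_neg_of_neg_of_pos ha (by linarith [le_abs_self b])) hb
    linarith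
  · by_contra! hb
    have hx := h ((|a| + 1) / -b) (div_pos (by positivity) (neg_pos.2 hb))
    have hmul : b * ((|a| + 1) / -b) = -(|a| + 1) := by
      field_simp [hb.ne]
    linarith [le_abs_self a]

theorem tendsto_add_mul_I_cobounded (z : ℂ) :
    Tendsto (fun y : ℝ ↦ z + y * Complex.I) atTop (cobounded ℂ) :=
  (tendsto_const_add_cobounded z).comp <| (tendsto_mul_right_cobounded Complex.I_ne_zero).comp <|
    tendsto_norm_atTop_iff_cobounded.1 <| by
      simpa only [Complex.norm_real] using tendsto_norm_atTop_atTop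

theorem nonneg_and_nonneg_of_re_affine_add_nonneg {a b : ℝ} {R : ℂ → ℂ}
    (hR : ∀ x : ℝ, 0 < x → Tendsto (fun y : ℝ ↦ R (x + y * Complex.I)) atTop (𝓝 0))
    (hpos : ∀ z : ℂ, 0 < z.re → 0 ≤ (a + b * z + R z).re) : 0 ≤ a ∧ 0 ≤ b := by
  refine nonneg_and_nonneg_of_forall_pos_nonneg_add_mul fun x hx ↦ ?_
  have hlim : Tendsto (fun y : ℝ ↦ a + b * x + (R (x + y * Complex.I)).re) atTop
      (𝓝 (a + b * x)) := by
    simpa using ((Complex.continuous_re.tendsto 0).comp (hR x hx)).const_add (a + b * x)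
  refine ge_of_tendsto' hlim fun y ↦ ?_
  simpa using hpos (x + y * Complex.I) (by simpa using hx)

theorem tendsto_sq_mul_div_sq_add_sq_atTop (t : ℝ) :
    Tendsto (fun y : ℝ ↦ y ^ 2 * t / (t ^ 2 + y ^ 2)) atTop (𝓝 t) := by
  have hlim : Tendsto (fun y : ℝ ↦ t / ((t * y⁻¹) ^ 2 + 1)) atTop (𝓝 t) := by
    simpa using! tendsto_const_nhds.div
      (((tendsto_inv_atTop_zero.const_mul t).pow 2).add_const 1) (by norm_num)
  refine hlim.congr' ?_
  filter_upwards [eventually_gt_atTop 0] with y hy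
  field_simp

theorem lintegral_ofReal_le_of_forall_integral_le {X : Type*} [MeasurableSpace X] {μ : Measure X}
    {g : X → ℝ} {C : ℝ} (hg : 0 ≤ᵐ[μ] g)
    (h_int : ∀ y : ℝ, Integrable (fun x ↦ y ^ 2 * g x / (g x ^ 2 + y ^ 2)) μ)
    (hle : ∀ y : ℝ, ∫ x, y ^ 2 * g x / (g x ^ 2 + y ^ 2) ∂μ ≤ C) :
    ∫⁻ x, ENNReal.ofReal (g x) ∂μ ≤ ENNReal.ofReal C := by
  have hbound (y : ℝ) :
      ∫⁻ x, ENNReal.ofReal (y ^ 2 * g x / (g x ^ 2 + y ^ 2)) ∂μ ≤ ENNReal.ofReal C := by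
    have hnonneg : 0 ≤ᵐ[μ] fun x ↦ y ^ 2 * g x / (g x ^ 2 + y ^ 2) := by
      filter_upwards [hg] with x (hx : 0 ≤ g x)
      change 0 ≤ y ^ 2 * g x / (g x ^ 2 + y ^ 2)
      positivity
    rw [← ofReal_integral_eq_lintegral_ofReal (h_int y) hnonneg]
    exact ENNReal.ofReal_le_ofReal (hle y)
  calc ∫⁻ x, ENNReal.ofReal (g x) ∂μ
      = ∫⁻ x, liminf (fun y : ℝ ↦ ENNReal.ofReal (y ^ 2 * g x / (g x ^ 2 + y ^ 2))) atTop ∂μ :=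
        lintegral_congr fun x ↦
          (ENNReal.tendsto_ofReal (tendsto_sq_mul_div_sq_add_sq_atTop (g x))).liminf_eq.symm
    _ ≤ liminf (fun y : ℝ ↦ ∫⁻ x, ENNReal.ofReal (y ^ 2 * g x / (g x ^ 2 + y ^ 2)) ∂μ) atTop :=
        lintegral_liminf_le' fun y ↦ (h_int y).aemeasurable.ennreal_ofReal
    _ ≤ liminf (fun _ : ℝ ↦ ENNReal.ofReal C) atTop :=
        liminf_le_liminf (Eventually.of_forall hbound)
    _ = ENNReal.ofReal C := liminf_const _

theorem add_ofReal_ne_zero {z : ℂ} {l : ℝ} (hz : 0 < z.re) (hl : 0 ≤ l) : z + l ≠ 0 :=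
  Complex.ne_zero_of_re_pos (by simpa using add_pos_of_pos_of_nonneg hz hl)

theorem sub_one_sq_div_add_ofReal {z : ℂ} {l : ℝ} (hz : 0 < z.re) (hl : 0 ≤ l) :
    (z - 1) ^ 2 / (z + l) = (z - 1) - (1 + l) + (1 + l) ^ 2 / (z + l) := by
  have hne := add_ofReal_ne_zero hz hl
  field_simp
  ring

theorem norm_one_add_div_add_ofReal_le {δ l : ℝ} {z : ℂ} (hδ : 0 < δ) (hz : δ ≤ z.re)
    (hl : 0 ≤ l) : ‖(1 + l) / (z + l)‖ ≤ (min δ 1)⁻¹ := by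
  have hnum : ‖(1 + l : ℂ)‖ = 1 + l := by
    rw [← Complex.ofReal_one, ← Complex.ofReal_add, Complex.norm_of_nonneg (by positivity)]
  have hden : min δ 1 * (1 + l) ≤ ‖z + l‖ :=
    calc min δ 1 * (1 + l) = min δ 1 + min δ 1 * l := by ring
      _ ≤ z.re + 1 * l := by
        gcongr
        exacts [(min_le_left _ _).trans hz, min_le_right _ _]
      _ = (z + l).re := by simp
      _ ≤ ‖z + l‖ := Complex.re_le_norm _
  have hmin : 0 < min δ 1 := lt_min hδ one_pos
  rw [norm_div, hnum, inv_eq_one_div, div_le_div_iff₀ (lt_of_lt_of_le (by positivity) hden) hmin]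
  linarith

section StieltjesTransform

variable {μ : Measure ℝ} {w : ℝ → ℂ}

theorem div_add_ofReal_eq_mul {l : ℝ} (hl : 0 ≤ l) (z : ℂ) :
    w l / (z + l) = w l / (1 + l) * ((1 + l) / (z + l)) :=
  (div_mul_div_cancel₀ (add_ofReal_ne_zero (by simp) hl)).symm

theorem integrable_div_add_ofReal (hμ : ∀ᵐ l ∂μ, 0 ≤ l)
    (hw : Integrable (fun l : ℝ ↦ w l / (1 + l)) μ) {z : ℂ} (hz : 0 < z.re) :
    Integrable (fun l : ℝ ↦ w l / (z + l)) μ := by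
  refine (hw.mul_bdd (g := fun l : ℝ ↦ (1 + l) / (z + l)) (c := (min z.re 1)⁻¹)
    (Measurable.aestronglyMeasurable (by fun_prop)) ?_).congr ?_
  · filter_upwards [hμ] with l hl using norm_one_add_div_add_ofReal_le hz le_rfl hl
  · filter_upwards [hμ] with l hl using (div_add_ofReal_eq_mul hl z).symm

theorem tendsto_integral_div_add_ofReal_cobounded (hμ : ∀ᵐ l ∂μ, 0 ≤ l)
    (hw : Integrable (fun l : ℝ ↦ w l / (1 + l)) μ) {δ : ℝ} (hδ : 0 < δ) :
    Tendsto (fun z : ℂ ↦ ∫ l : ℝ, w l / (z + l) ∂μ) (cobounded ℂ ⊓ 𝓟 {z | δ ≤ z.re}) (𝓝 0) := by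
  have hre : ∀ᶠ z in cobounded ℂ ⊓ 𝓟 {z | δ ≤ z.re}, δ ≤ z.re :=
    mem_inf_of_right (mem_principal_self _)
  have : (cobounded ℂ).IsCountablyGenerated := by
    rw [← comap_norm_atTop]
    infer_instance
  rw [← integral_zero ℝ ℂ (μ := μ)]
  refine tendsto_integral_filter_of_dominated_convergence
    (fun l ↦ ‖w l / (1 + l)‖ * (min δ 1)⁻¹) ?_ ?_ (hw.norm.mul_const _) ?_
  · filter_upwards [hre] with z hz
    exact (integrable_div_add_ofReal hμ hw (hδ.trans_le hz)).aestronglyMeasurable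
  · filter_upwards [hre] with z hz
    filter_upwards [hμ] with l hl
    rw [div_add_ofReal_eq_mul hl z, norm_mul]
    gcongr
    exact norm_one_add_div_add_ofReal_le hδ hz hl
  · refine Eventually.of_forall fun l ↦ ?_
    simpa [div_eq_mul_inv] using ((tendsto_inv₀_cobounded.comp
      (tendsto_add_const_cobounded (l : ℂ))).mono_left inf_le_left).const_mul (w l)

theorem tendsto_integral_div_add_mul_I_add_ofReal (hμ : ∀ᵐ l ∂μ, 0 ≤ l)
    (hw : Integrable (fun l : ℝ ↦ w l / (1 + l)) μ) {x : ℝ} (hx : 0 < x) :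
    Tendsto (fun y : ℝ ↦ ∫ l : ℝ, w l / (x + y * Complex.I + l) ∂μ) atTop (𝓝 0) :=
  (tendsto_integral_div_add_ofReal_cobounded hμ hw hx).comp <|
    tendsto_inf.2 ⟨tendsto_add_mul_I_cobounded x, tendsto_principal.2 (by simp)⟩

end StieltjesTransform

section Ffun

variable {f₁ c γ : ℝ} {μ : Measure ℝ}

theorem re_mul_I_sq_div_one_add_mul_I_add_ofReal (y l : ℝ) :
    ((y * Complex.I) ^ 2 / (1 + y * Complex.I + l)).re =
      -(y ^ 2 * (1 + l) / ((1 + l) ^ 2 + y ^ 2)) := by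
  simp [Complex.div_re, Complex.normSq_apply, pow_two, neg_div]

theorem integrable_mul_I_sq_div_one_add_mul_I_add_ofReal (hμ : ∀ᵐ l ∂μ, 0 ≤ l)
    (h_int : Integrable (fun l : ℝ ↦ (1 + l)⁻¹) μ) (y : ℝ) :
    Integrable (fun l : ℝ ↦ (y * Complex.I) ^ 2 / (1 + y * Complex.I + l)) μ := by
  refine integrable_div_add_ofReal hμ ?_ (by simp)
  simpa [div_eq_mul_inv] using h_int.ofReal.const_mul ((y * Complex.I) ^ 2)

theorem integrable_sq_mul_one_add_div (hμ : ∀ᵐ l ∂μ, 0 ≤ l)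
    (h_int : Integrable (fun l : ℝ ↦ (1 + l)⁻¹) μ) (y : ℝ) :
    Integrable (fun l : ℝ ↦ y ^ 2 * (1 + l) / ((1 + l) ^ 2 + y ^ 2)) μ := by
  simpa [re_mul_I_sq_div_one_add_mul_I_add_ofReal] using
    (integrable_mul_I_sq_div_one_add_mul_I_add_ofReal hμ h_int y).re

theorem re_Ffun_one_add_mul_I (hμ : ∀ᵐ l ∂μ, 0 ≤ l)
    (h_int : Integrable (fun l : ℝ ↦ (1 + l)⁻¹) μ) (y : ℝ) :
    (Ffun f₁ c γ μ (1 + y * Complex.I)).re =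
      f₁ - γ * y ^ 2 - ∫ l, y ^ 2 * (1 + l) / ((1 + l) ^ 2 + y ^ 2) ∂μ := by
  have hre := integral_re (integrable_mul_I_sq_div_one_add_mul_I_add_ofReal hμ h_int y)
  simp only [RCLike.re_eq_complex_re, re_mul_I_sq_div_one_add_mul_I_add_ofReal,
    integral_neg] at hre
  simp only [Ffun, add_sub_cancel_left, Complex.add_re, ← hre]
  simp [pow_two, sub_eq_add_neg]

theorem eq_zero_and_integral_le_of_re_Ffun_nonneg (hγ : 0 ≤ γ) (hμ : ∀ᵐ l ∂μ, 0 ≤ l)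
    (h_int : Integrable (fun l : ℝ ↦ (1 + l)⁻¹) μ)
    (hpos : ∀ y : ℝ, 0 ≤ (Ffun f₁ c γ μ (1 + y * Complex.I)).re) :
    γ = 0 ∧ ∀ y : ℝ, ∫ l, y ^ 2 * (1 + l) / ((1 + l) ^ 2 + y ^ 2) ∂μ ≤ f₁ := by
  have hsum (y : ℝ) : 0 ≤ f₁ - γ * y ^ 2 - ∫ l, y ^ 2 * (1 + l) / ((1 + l) ^ 2 + y ^ 2) ∂μ :=
    re_Ffun_one_add_mul_I hμ h_int y ▸ hpos y
  have haffine (t : ℝ) (ht : 0 < t) : 0 ≤ f₁ + -γ * t := by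
    have hnonneg : 0 ≤ ∫ l, √t ^ 2 * (1 + l) / ((1 + l) ^ 2 + √t ^ 2) ∂μ := by
      refine integral_nonneg_of_ae ?_
      filter_upwards [hμ] with l hl
      positivity
    have hsqrt := hsum √t
    rw [Real.sq_sqrt ht.le] at hsqrt hnonneg
    linarith
  have hneg : 0 ≤ -γ := (nonneg_and_nonneg_of_forall_pos_nonneg_add_mul haffine).2
  obtain rfl : γ = 0 := le_antisymm (neg_nonneg.1 hneg) hγ
  exact ⟨rfl, fun y ↦ by linarith [hsum y]⟩

theorem integrable_one_add_sq_div_one_add (h_int : Integrable (fun l : ℝ ↦ 1 + l) μ) :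
    Integrable (fun l : ℝ ↦ (1 + l : ℂ) ^ 2 / (1 + l)) μ := by
  simpa [pow_two] using h_int.ofReal (𝕜 := ℂ)

theorem integral_sub_one_sq_div_add_ofReal (hμ : ∀ᵐ l ∂μ, 0 ≤ l)
    (h_int : Integrable (fun l : ℝ ↦ 1 + l) μ) {z : ℂ} (hz : 0 < z.re) :
    ∫ l : ℝ, (z - 1) ^ 2 / (z + l) ∂μ =
      μ.real Set.univ * (z - 1) - (∫ l, (1 + l) ∂μ : ℝ) + ∫ l : ℝ, (1 + l) ^ 2 / (z + l) ∂μ := by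
  have hone : Integrable (fun _ : ℝ ↦ (1 : ℝ)) μ := by
    refine h_int.mono' (by fun_prop) ?_
    filter_upwards [hμ] with l hl
    simpa using hl
  have : IsFiniteMeasure μ := (integrable_const_iff_isFiniteMeasure one_ne_zero).1 hone
  have hlin : Integrable (fun l : ℝ ↦ (1 + l : ℂ)) μ := by
    simpa using h_int.ofReal (𝕜 := ℂ)
  have hsub : Integrable (fun l : ℝ ↦ (z - 1) - (1 + l)) μ := (integrable_const _).sub hlin
  calc ∫ l : ℝ, (z - 1) ^ 2 / (z + l) ∂μ
      = ∫ l : ℝ, ((z - 1) - (1 + l) + (1 + l) ^ 2 / (z + l)) ∂μ :=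
        integral_congr_ae (hμ.mono fun l hl ↦ sub_one_sq_div_add_ofReal hz hl)
    _ = μ.real Set.univ * (z - 1) - (∫ l : ℝ, (1 + l : ℂ) ∂μ) +
          ∫ l : ℝ, (1 + l) ^ 2 / (z + l) ∂μ := by
        rw [integral_add hsub
          (integrable_div_add_ofReal hμ (integrable_one_add_sq_div_one_add h_int) hz),
          integral_sub (integrable_const _) hlin, integral_const, Complex.real_smul]
    _ = _ := by
        simp only [← integral_complex_ofReal, Complex.ofReal_add, Complex.ofReal_one]

theorem Ffun_eq_affine_add_integral (hμ : ∀ᵐ l ∂μ, 0 ≤ l)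
    (h_int : Integrable (fun l : ℝ ↦ 1 + l) μ) {z : ℂ} (hz : 0 < z.re) :
    Ffun f₁ c 0 μ z = (f₁ - (c + μ.real Set.univ) - ∫ l, (1 + l) ∂μ : ℝ) +
      (c + μ.real Set.univ : ℝ) * z + ∫ l : ℝ, (1 + l) ^ 2 / (z + l) ∂μ := by
  rw [Ffun, integral_sub_one_sq_div_add_ofReal hμ h_int hz]
  push_cast
  ring

end Ffun

/-- If `F(z) = f₁ + c(z−1) + γ(z−1)² + ∫_{[0,∞)} (z−1)²/(z+λ) dμ(λ)` (with `γ ≥ 0` and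
`∫ (1+λ)⁻¹ dμ < ∞`) has non-negative real part on `{Re z > 0}`, then `γ = 0`,
`∫ (1+λ) dμ(λ) ≤ f₁ < ∞`, and `F(x) = α + βx + ∫ (1+λ)²/(x+λ) dμ(λ)` for all `x > 0`, with
some `α, β ≥ 0`. -/
theorem stmt17 (f₁ c γ : ℝ) (hγ : 0 ≤ γ) (μ : Measure ℝ)
    (hμs : μ (Set.Ici (0 : ℝ))ᶜ = 0)
    (hμint : Integrable (fun l : ℝ => (1 + l)⁻¹) μ)
    (hpos : ∀ z : ℂ, 0 < z.re → 0 ≤ (Ffun f₁ c γ μ z).re) :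
    γ = 0 ∧
    (∫⁻ l, ENNReal.ofReal (1 + l) ∂μ) ≤ ENNReal.ofReal f₁ ∧
    ∃ α β : ℝ, 0 ≤ α ∧ 0 ≤ β ∧
      ∀ x : ℝ, 0 < x →
        Ffun f₁ c γ μ (x : ℂ) =
          (α : ℂ) + (β : ℂ) * (x : ℂ) +
            ∫ l, ((1 : ℂ) + (l : ℂ)) ^ 2 / ((x : ℂ) + (l : ℂ)) ∂μ := by
  have hμ : ∀ᵐ l ∂μ, 0 ≤ l := hμs
  obtain ⟨rfl, hle⟩ := eq_zero_and_integral_le_of_re_Ffun_nonneg hγ hμ hμint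
    fun y ↦ hpos _ (by simp)
  have hnonneg : 0 ≤ᵐ[μ] fun l ↦ 1 + l := hμ.mono fun l hl ↦ add_nonneg zero_le_one hl
  have hlintegral : ∫⁻ l, ENNReal.ofReal (1 + l) ∂μ ≤ ENNReal.ofReal f₁ :=
    lintegral_ofReal_le_of_forall_integral_le hnonneg (integrable_sq_mul_one_add_div hμ hμint) hle
  have h_int : Integrable (fun l ↦ 1 + l) μ :=
    ⟨by fun_prop, (hasFiniteIntegral_iff_ofReal hnonneg).2
      (hlintegral.trans_lt ENNReal.ofReal_lt_top)⟩
  have hF {z : ℂ} (hz : 0 < z.re) := Ffun_eq_affine_add_integral (f₁ := f₁) (c := c) hμ h_int hz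
  obtain ⟨hα, hβ⟩ := nonneg_and_nonneg_of_re_affine_add_nonneg
    (fun x hx ↦ tendsto_integral_div_add_mul_I_add_ofReal hμ
      (integrable_one_add_sq_div_one_add h_int) hx)
    fun z hz ↦ hF hz ▸ hpos z hz
  exact ⟨rfl, hlintegral, _, _, hα, hβ, fun x hx ↦ hF (by simpa using hx)⟩
end
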